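/- arXiv:1902.05195 — 3 statements merged into one kernel-verified Lean document; each statement's English description precedes it below -/
import Mathlib

section
/- Let p and q be distinct primes, let b be a positive integer, set n = q^b, and let r be a positive integer with gcd(r, pq) = 1. Let ζ = e^{2πi/(pr)} ∈ ℂ and suppose Y ∈ ℤ[ζ] satisfies Y·conj(Y) = n, where conj denotes complex conjugation. If the multiplicative order of q modulo p is even and p > max(3^{n/2}, n² + n + 1), then there exists a root of unity η ∈ ℂ such that Y·η ∈ ℤ[e^{2πi/r}]. -/
open Complex

/-!
Write `Y = ∑ aᵢ ξⁱ` with `ξ = ζ ^ r` of order `p` and `aᵢ ∈ ℤ[ζ_r]`. Over `ℤ[ζ_r]` the powers of `ξ`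
satisfy only the relation `∑ ξⁱ = 0`, so `|Y|² = n` determines `∑ |aᵢ - aⱼ|²`. Every nonzero
algebraic integer contributes at least `1` on average over its conjugates, so if `p > n² + n + 1`
the `aᵢ` can be shifted by a constant so that at most `n` of them, those with index in `S`, are
nonzero. Some residue mod `p` is then not a difference in `S`, which forces the autocorrelation of
`a` to vanish at every nonzero shift: each nonzero difference in `S` occurs at least twice.

Since `q` has even order mod `p`, some `q ^ j` is `-1` mod `p`. The automorphism `ζ ↦ ζ ^ q ^ j`
fixes all ideals above `q`, so it multiplies `Y` by a root of unity (Kronecker), and `S` is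
symmetric about some `h`. Every nonzero `s ∈ S - h` is therefore the midpoint of two distinct
elements of `(S - h) ∪ {0}`. Choosing one such relation for the last element of each chain
`z, 3z, 9z, …` in `S - h`, up to sign, gives an integral linear system solvable mod `p`, and the
Hadamard bound on its determinant yields `p² ≤ 3 ^ n` (when the determinant is zero, a maximum
principle takes over). So `S ⊆ {h}`, and `Y` is a power of `ξ` times an element of `ℤ[ζ_r]`.
-/

section DeterminantBound

variable {ι : Type*} [Fintype ι]

theorem prod_le_exp_sum_sub_card {z : ι → ℝ} (hz : ∀ i, 0 ≤ z i) :
    ∏ i, z i ≤ Real.exp (∑ i, z i - Fintype.card ι) := by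
  have hsum : ∑ i, z i - Fintype.card ι = ∑ i, (z i - 1) := by simp
  rw [hsum, Real.exp_sum]
  refine Finset.prod_le_prod (fun i _ => hz i) fun i _ => ?_
  linarith [Real.add_one_le_exp (z i - 1)]

variable [DecidableEq ι]

theorem det_sq_le_pow_card (A : Matrix ι ι ℝ) {C : ℝ} (hC : 0 < C)
    (hA : ∀ i, ∑ j, A i j ^ 2 ≤ C) : A.det ^ 2 ≤ C ^ Fintype.card ι := by
  have hpsd : (A * A.conjTranspose).PosSemidef := Matrix.posSemidef_self_mul_conjTranspose A
  have hdet : A.det ^ 2 = ∏ i, hpsd.isHermitian.eigenvalues i := by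
    simpa [sq] using hpsd.isHermitian.det_eq_prod_eigenvalues
  have htrace : ∑ i, hpsd.isHermitian.eigenvalues i ≤ C * Fintype.card ι :=
    calc ∑ i, hpsd.isHermitian.eigenvalues i
        = (A * A.conjTranspose).trace := hpsd.isHermitian.trace_eq_sum_eigenvalues.symm
      _ = ∑ i, ∑ j, A i j ^ 2 := by simp [Matrix.trace, Matrix.mul_apply, sq]
      _ ≤ ∑ _i : ι, C := Finset.sum_le_sum fun i _ => hA i
      _ = C * Fintype.card ι := by simp [mul_comm]
  have hprod : ∏ i, hpsd.isHermitian.eigenvalues i / C ≤ 1 := by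
    refine (prod_le_exp_sum_sub_card fun i => div_nonneg (hpsd.eigenvalues_nonneg i) hC.le).trans ?_
    rw [Real.exp_le_one_iff, ← Finset.sum_div, sub_nonpos, div_le_iff₀ hC]
    linarith
  rwa [Finset.prod_div_distrib, ← hdet, Finset.prod_const, Finset.card_univ,
    div_le_one (by positivity)] at hprod

theorem abs_det_le_prod (A : Matrix ι ι ℝ) {w : ι → ℝ} (hw : ∀ j, 0 < w j) {C : ℝ} (hC : 0 < C)
    (hA : ∀ i, ∑ j, (A i j / w j) ^ 2 ≤ C ^ 2) : |A.det| ≤ ∏ j, C * w j := by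
  set A' : Matrix ι ι ℝ := Matrix.of fun i j => A i j / w j with hA'
  have hfactor : A.det = (∏ j, w j) * A'.det := by
    rw [← Matrix.det_mul_row]
    congr 1
    ext i j
    simp [hA', mul_div_cancel₀ _ (hw j).ne']
  have hA'det : |A'.det| ≤ C ^ Fintype.card ι := by
    refine abs_le_of_sq_le_sq ?_ (by positivity)
    rw [← pow_mul, mul_comm, pow_mul]
    exact det_sq_le_pow_card A' (by positivity) hA
  rw [hfactor, abs_mul, abs_of_pos (Finset.prod_pos fun j _ => hw j), Finset.prod_mul_distrib,
    Finset.prod_const, Finset.card_univ, mul_comm]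
  exact mul_le_mul_of_nonneg_right hA'det (Finset.prod_nonneg fun j _ => (hw j).le)

theorem prime_le_abs_det_of_mulVec_eq_zero {p : ℕ} [Fact p.Prime] {B : Matrix ι ι ℤ}
    {z : ι → ZMod p} (hz : z ≠ 0) (hBz : (B.map (Int.cast : ℤ → ZMod p)).mulVec z = 0)
    (hB : B.det ≠ 0) : (p : ℤ) ≤ |B.det| := by
  have hdet : ((B.det : ℤ) : ZMod p) = 0 := by
    rw [Int.cast_det]
    exact Matrix.exists_mulVec_eq_zero_iff.1 ⟨z, hz, hBz⟩
  rw [ZMod.intCast_zmod_eq_zero_iff_dvd] at hdet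
  exact Int.le_of_dvd (abs_pos.2 hB) ((dvd_abs _ _).2 hdet)

end DeterminantBound

section ThreeTermRelations

variable {ι : Type*} [DecidableEq ι]

/-- The coefficient matrix of the linear system `a i * x i = b i * x (e i) + d i * x (f i)`, in
which each equation involves at most three of the unknowns. The indices `i`, `e i`, `f i` may
coincide, and then the coefficients add up. -/
def threeTermMatrix {R : Type*} [Ring R] (a b d : ι → R) (e f : ι → ι) : Matrix ι ι R :=
  Matrix.of fun i => Pi.single i (a i) - Pi.single (e i) (b i) - Pi.single (f i) (d i)

theorem threeTermMatrix_map_intCast {R : Type*} [Ring R] (a b d : ι → ℤ) (e f : ι → ι) :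
    (threeTermMatrix a b d e f).map (Int.cast : ℤ → R) =
      threeTermMatrix (fun i => (a i : R)) (fun i => (b i : R)) (fun i => (d i : R)) e f := by
  ext i j
  simp [threeTermMatrix, Pi.single_apply]

variable [Fintype ι]

theorem threeTermMatrix_mulVec {R : Type*} [CommRing R] (a b d : ι → R) (e f : ι → ι) (x : ι → R)
    (i : ι) :
    (threeTermMatrix a b d e f).mulVec x i = a i * x i - b i * x (e i) - d i * x (f i) := by
  change (Pi.single i (a i) - Pi.single (e i) (b i) - Pi.single (f i) (d i)) ⬝ᵥ x = _
  simp only [sub_dotProduct, single_dotProduct]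

theorem sum_sq_three_singles_le {α β δ : ℝ} {i e f : ι} (hα : |α| ≤ 2) (hβ : |β| ≤ 1)
    (hδ : |δ| ≤ 1) (hβe : e = i → |β| ≤ 1 / 3) (hδf : f = i → |δ| ≤ 1 / 3) :
    ∑ j, (Pi.single i α - Pi.single e β - Pi.single f δ : ι → ℝ) j ^ 2 ≤ 3 ^ 2 := by
  set v : ι → ℝ := Pi.single i α - Pi.single e β - Pi.single f δ with hv
  have hexpand : ∑ j, v j ^ 2 = α * v i - β * v e - δ * v f := by
    calc ∑ j, v j ^ 2 = v ⬝ᵥ v := by simp only [dotProduct, sq]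
      _ = α * v i - β * v e - δ * v f := by
        nth_rewrite 1 [hv]
        simp only [sub_dotProduct, single_dotProduct]
  rw [hexpand]
  simp only [abs_le] at hα hβ hδ hβe hδf
  by_cases he : e = i <;> by_cases hf : f = i <;> by_cases hef : e = f <;>
    simp_all [Pi.single_apply, eq_comm] <;> nlinarith

theorem sum_sq_threeTermMatrix_div_le {a b d w : ι → ℝ} {e f : ι → ι} (hw : ∀ j, 0 < w j)
    (ha : ∀ i, |a i| ≤ 2 * w i) (hb : ∀ i, |b i| ≤ w (e i)) (hd : ∀ i, |d i| ≤ w (f i))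
    (hbe : ∀ i, e i = i → 3 * |b i| ≤ w i) (hdf : ∀ i, f i = i → 3 * |d i| ≤ w i) (i : ι) :
    ∑ j, (threeTermMatrix a b d e f i j / w j) ^ 2 ≤ 3 ^ 2 := by
  have abs_div_le {x y C : ℝ} (hy : 0 < y) (h : |x| ≤ C * y) : |x / y| ≤ C := by
    rwa [abs_div, abs_of_pos hy, div_le_iff₀ hy]
  have hrow (j : ι) : threeTermMatrix a b d e f i j / w j = (Pi.single i (a i / w i) -
      Pi.single (e i) (b i / w (e i)) - Pi.single (f i) (d i / w (f i)) : ι → ℝ) j := by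
    simp only [threeTermMatrix, Matrix.of_apply, Pi.sub_apply, Pi.single_apply, sub_div, ite_div,
      zero_div]
    congr 1 <;> [congr 1; skip] <;> split_ifs with hj <;> simp only [hj]
  simp only [hrow]
  exact sum_sq_three_singles_le (abs_div_le (hw _) (ha i))
    (abs_div_le (hw _) (by simpa using hb i)) (abs_div_le (hw _) (by simpa using hd i))
    (fun he => abs_div_le (hw _) (by rw [he]; linarith [hbe i he]))
    (fun hf => abs_div_le (hw _) (by rw [hf]; linarith [hdf i hf]))

variable {a b d : ι → ℤ} {e f : ι → ι}

theorem exists_ne_zero_of_det_threeTermMatrix_eq_zero (h : (threeTermMatrix a b d e f).det = 0) :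
    ∃ x : ι → ℤ, x ≠ 0 ∧ ∀ i, a i * x i = b i * x (e i) + d i * x (f i) := by
  obtain ⟨x, hx, hker⟩ := Matrix.exists_mulVec_eq_zero_iff.2 h
  refine ⟨x, hx, fun i => ?_⟩
  have hrow := threeTermMatrix_mulVec a b d e f x i
  rw [hker, Pi.zero_apply] at hrow
  linarith

theorem prime_le_three_pow_of_det_threeTermMatrix_ne_zero {p : ℕ} [Fact p.Prime] {k : ι → ℕ}
    (ha : ∀ i, |a i| ≤ 2 * 3 ^ k i) (hb : ∀ i, |b i| ≤ 3 ^ k (e i)) (hd : ∀ i, |d i| ≤ 3 ^ k (f i))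
    (hbe : ∀ i, e i = i → 3 * |b i| ≤ 3 ^ k i) (hdf : ∀ i, f i = i → 3 * |d i| ≤ 3 ^ k i)
    {z : ι → ZMod p} (hz : z ≠ 0) (hrel : ∀ i, a i * z i = b i * z (e i) + d i * z (f i))
    (hdet : (threeTermMatrix a b d e f).det ≠ 0) : p ≤ 3 ^ ∑ i, (k i + 1) := by
  have hker : ((threeTermMatrix a b d e f).map (Int.cast : ℤ → ZMod p)).mulVec z = 0 := by
    ext i
    rw [threeTermMatrix_map_intCast, threeTermMatrix_mulVec, hrel, Pi.zero_apply]
    ring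
  have hle : (p : ℝ) ≤ ∏ i, 3 * 3 ^ k i :=
    calc (p : ℝ) ≤ |((threeTermMatrix a b d e f).det : ℝ)| := by
          exact_mod_cast prime_le_abs_det_of_mulVec_eq_zero hz hker hdet
      _ ≤ ∏ i, 3 * 3 ^ k i := by
          rw [Int.cast_det, threeTermMatrix_map_intCast]
          exact abs_det_le_prod _ (fun _ => by positivity) three_pos <|
            sum_sq_threeTermMatrix_div_le (fun _ => by positivity)
              (fun i => by exact_mod_cast ha i) (fun i => by exact_mod_cast hb i)
              (fun i => by exact_mod_cast hd i) (fun i hi => by exact_mod_cast hbe i hi)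
              (fun i hi => by exact_mod_cast hdf i hi)
  simp only [← pow_succ', Finset.prod_pow_eq_pow_sum] at hle
  exact_mod_cast hle

end ThreeTermRelations

section BalancedSets

/-- A finite set each of whose elements is the midpoint of two distinct elements of the set. -/
def IsBalanced {R : Type*} [Ring R] (I : Finset R) : Prop :=
  ∀ v ∈ I, ∃ t ∈ I, ∃ u ∈ I, t ≠ u ∧ t + u = 2 * v

-- The maximum principle: the points where `x` is largest form a balanced set that avoids `j`.
theorem exists_isBalanced_ssubset_of_harmonic {R : Type*} [Ring R] {I : Finset R} {t u : I → I}
    (htu : ∀ v, t v ≠ u v) (hmid : ∀ v, (t v + u v : R) = 2 * v) {x : I → ℤ} {j v₀ : I}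
    (hxj : x j = 0) (hxv₀ : 0 < x v₀) (hx : ∀ v ≠ j, 2 * x v = x (t v) + x (u v)) :
    ∃ I' ⊂ I, I'.Nonempty ∧ IsBalanced I' := by
  classical
  obtain ⟨m, -, hmax⟩ := Finset.univ.exists_max_image x ⟨j, Finset.mem_univ j⟩
  have hxm : 0 < x m := hxv₀.trans_le (hmax v₀ (Finset.mem_univ _))
  let M : Finset I := {v | x v = x m}
  have hM {v : I} : (v : R) ∈ M.map (.subtype _) ↔ x v = x m := by simp [M]
  refine ⟨M.map (.subtype _), ?_, ⟨m, hM.2 rfl⟩, ?_⟩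
  · refine Finset.ssubset_iff_subset_ne.2 ⟨Finset.map_subtype_subset M, fun h => ?_⟩
    exact (hxj ▸ hxm).ne (hM.1 (h.symm.subset j.2))
  · intro v hv
    obtain ⟨v, -, rfl⟩ := Finset.mem_map.1 hv
    have hvm := hM.1 hv
    have hharm := hx v (by rintro rfl; omega)
    have hxt := hmax (t v) (Finset.mem_univ _)
    have hxu := hmax (u v) (Finset.mem_univ _)
    exact ⟨t v, hM.2 (by omega), u v, hM.2 (by omega), Subtype.coe_ne_coe.2 (htu v), hmid v⟩

theorem exists_harmonic_of_three_pow_card_lt {p : ℕ} [Fact p.Prime] {I : Finset (ZMod p)}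
    {t u : I → I} (htu : ∀ v, t v ≠ u v) (hmid : ∀ v, (t v + u v : ZMod p) = 2 * v)
    (hlt : 3 ^ I.card < p) (j : I) :
    ∃ x : I → ℤ, x ≠ 0 ∧ x j = 0 ∧ ∀ v ≠ j, 2 * x v = x (t v) + x (u v) := by
  have ht_ne (v : I) : t v ≠ v := fun h =>
    htu v (Subtype.ext (by linear_combination 2 * congrArg Subtype.val h - hmid v))
  have hu_ne (v : I) : u v ≠ v := fun h =>
    htu v (Subtype.ext (by linear_combination hmid v - 2 * congrArg Subtype.val h))
  let a : I → ℤ := fun v => if v = j then 1 else 2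
  let b : I → ℤ := fun v => if v = j then 0 else 1
  have hdet : (threeTermMatrix a b b t u).det = 0 := by
    by_contra hdet
    refine hlt.not_ge ?_
    have hle := prime_le_three_pow_of_det_threeTermMatrix_ne_zero (p := p) (a := a) (b := b)
      (d := b) (e := t) (f := u) (k := fun _ => 0) (z := fun v => (v - j : ZMod p))
      ?_ ?_ ?_ ?_ ?_ ?_ ?_ hdet
    · simpa using hle
    · intro v; dsimp only [a]; split_ifs <;> norm_num
    · intro v; dsimp only [b]; split_ifs <;> norm_num
    · intro v; dsimp only [b]; split_ifs <;> norm_num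
    · exact fun v hv => absurd hv (ht_ne v)
    · exact fun v hv => absurd hv (hu_ne v)
    · exact fun h => ht_ne j (Subtype.ext (sub_eq_zero.1 (congrFun h (t j))))
    · intro v
      dsimp only [a, b]
      split_ifs with hv
      · simp [hv]
      · push_cast; linear_combination -hmid v
  obtain ⟨x, hx, hrel⟩ := exists_ne_zero_of_det_threeTermMatrix_eq_zero hdet
  refine ⟨x, hx, by simpa [a, b] using hrel j, fun v hv => by simpa [a, b, hv] using hrel v⟩

theorem IsBalanced.prime_le_three_pow_card {p : ℕ} [Fact p.Prime] {I : Finset (ZMod p)}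
    (hI : IsBalanced I) (hne : I.Nonempty) : p ≤ 3 ^ I.card := by
  induction I using Finset.strongInduction with
  | H I ih =>
    by_contra! hlt
    suffices hsmaller : ∃ I' ⊂ I, I'.Nonempty ∧ IsBalanced I' by
      obtain ⟨I', hI', hne', hbal⟩ := hsmaller
      exact hlt.not_ge ((ih I' hI' hbal hne').trans
        (Nat.pow_le_pow_right three_pos (Finset.card_le_card hI'.subset)))
    choose t ht u hu htu hmid using fun v : I => hI v v.2
    let t' : I → I := fun v => ⟨t v, ht v⟩
    let u' : I → I := fun v => ⟨u v, hu v⟩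
    have htu' (v : I) : t' v ≠ u' v := Subtype.coe_ne_coe.1 (htu v)
    obtain ⟨j, hj⟩ := hne
    obtain ⟨x, hx0, hxj, hharm⟩ :=
      exists_harmonic_of_three_pow_card_lt (t := t') htu' hmid hlt ⟨j, hj⟩
    obtain ⟨v, hv⟩ := Function.ne_iff.1 hx0
    rcases hv.lt_or_gt with hneg | hpos
    · refine exists_isBalanced_ssubset_of_harmonic (x := -x) htu' hmid
        (neg_eq_zero.2 hxj) (neg_pos.2 hneg) fun w hw => ?_
      simp only [Pi.neg_apply]
      linarith [hharm w hw]
    · exact exists_isBalanced_ssubset_of_harmonic htu' hmid hxj hpos hharm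

end BalancedSets

section WeightedRelations

theorem eq_of_add_eq_two_mul_of_abs_le {a b m : ℤ} (ha : |a| ≤ |m|) (hb : |b| ≤ |m|)
    (h : a + b = 2 * m) : a = m ∧ b = m := by
  rw [abs_le] at ha hb
  rcases abs_cases m with ⟨hm, _⟩ | ⟨hm, _⟩ <;> rw [hm] at ha hb <;> omega

theorem sign_mul_eq_of_mul_eq {q q' x x' y : ℤ} (hq : 0 < q) (hx : x ≠ 0) (hy : |y| ≤ q')
    (hle : |q' * x'| ≤ |q * x|) (h : y * x' = q * x) :
    x.sign * y = x'.sign * q' ∧ |q' * x'| = |q * x| := by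
  have hx' : 0 < |x'| := abs_pos.2 (right_ne_zero_of_mul (h ▸ mul_ne_zero hq.ne' hx))
  rw [abs_mul, abs_of_nonneg ((abs_nonneg y).trans hy)] at hle ⊢
  rw [← h, abs_mul] at hle ⊢
  have hyq : |y| = q' := hy.antisymm (le_of_mul_le_mul_right hle hx')
  refine ⟨?_, by rw [hyq]⟩
  have hsign : x.sign = y.sign * x'.sign := by
    rw [← Int.sign_mul, h, Int.sign_mul, Int.sign_eq_one_of_pos hq, one_mul]
  rw [hsign, mul_right_comm, Int.sign_mul_self_eq_abs, hyq, mul_comm]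

theorem extremal_of_two_mul_eq_add {q q₁ q₂ x x₁ x₂ y w : ℤ} (hq : 0 < q) (hx : x ≠ 0)
    (hy : |y| ≤ q₁) (hw : |w| ≤ q₂) (hle₁ : |q₁ * x₁| ≤ |q * x|) (hle₂ : |q₂ * x₂| ≤ |q * x|)
    (h : 2 * q * x = y * x₁ + w * x₂) :
    (x.sign * y = x₁.sign * q₁ ∧ |q₁ * x₁| = |q * x|) ∧
      x.sign * w = x₂.sign * q₂ ∧ |q₂ * x₂| = |q * x| := by
  have abs_mul_le {y q' x' : ℤ} (hy : |y| ≤ q') : |y * x'| ≤ |q' * x'| := by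
    rw [abs_mul, abs_mul]
    exact mul_le_mul_of_nonneg_right (hy.trans (le_abs_self q')) (abs_nonneg x')
  obtain ⟨h₁, h₂⟩ := eq_of_add_eq_two_mul_of_abs_le ((abs_mul_le hy).trans hle₁)
    ((abs_mul_le hw).trans hle₂) (by rw [← h, mul_assoc])
  exact ⟨sign_mul_eq_of_mul_eq hq hx hy hle₁ h₁, sign_mul_eq_of_mul_eq hq hx hw hle₂ h₂⟩

variable {ι : Type*} [Fintype ι] {e f : ι → ι} {y w : ι → ℤ}

-- The maximum principle again, now for `|q i * x i|`: where it is largest, all coefficients are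
-- extremal and the weighted relations become midpoint relations up to sign.
theorem exists_isBalanced_of_weighted_relations {R : Type*} [CommRing R] {q x : ι → ℤ} {z : ι → R}
    (hq : ∀ i, 0 < q i) (hy : ∀ i, |y i| ≤ q (e i)) (hw : ∀ i, |w i| ≤ q (f i)) (hx : x ≠ 0)
    (hrelx : ∀ i, 2 * q i * x i = y i * x (e i) + w i * x (f i))
    (hrelz : ∀ i, 2 * q i * z i = y i * z (e i) + w i * z (f i))
    (hne : ∀ i, y i * z (e i) ≠ w i * z (f i)) :
    ∃ I : Finset R, I.Nonempty ∧ IsBalanced I ∧ I.card ≤ Fintype.card ι := by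
  classical
  obtain ⟨i₀, hi₀⟩ := Function.ne_iff.1 hx
  obtain ⟨m, -, hmax⟩ := Finset.univ.exists_max_image (fun i => |q i * x i|) ⟨i₀, Finset.mem_univ _⟩
  have hm : 0 < |q m * x m| :=
    (abs_pos.2 (mul_ne_zero (hq i₀).ne' hi₀)).trans_le (hmax i₀ (Finset.mem_univ _))
  let M : Finset ι := {i | |q i * x i| = |q m * x m|}
  have hM {i : ι} : i ∈ M ↔ |q i * x i| = |q m * x m| := by simp [M]
  let v : ι → R := fun i => (x i).sign * (q i * z i)
  refine ⟨M.image v, ⟨v m, Finset.mem_image_of_mem v (hM.2 rfl)⟩, ?_,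
    Finset.card_image_le.trans M.card_le_univ⟩
  simp only [IsBalanced, Finset.forall_mem_image]
  intro i hi
  have hxi : x i ≠ 0 := right_ne_zero_of_mul (abs_pos.1 (hM.1 hi ▸ hm))
  have hle (j : ι) : |q j * x j| ≤ |q i * x i| := hM.1 hi ▸ hmax j (Finset.mem_univ j)
  obtain ⟨⟨hye, hme⟩, hwf, hmf⟩ :=
    extremal_of_two_mul_eq_add (hq i) hxi (hy i) (hw i) (hle (e i)) (hle (f i)) (hrelx i)
  have hve : v (e i) = (x i).sign * (y i * z (e i)) := by
    simp only [v, ← mul_assoc, ← Int.cast_mul, hye]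
  have hvf : v (f i) = (x i).sign * (w i * z (f i)) := by
    simp only [v, ← mul_assoc, ← Int.cast_mul, hwf]
  refine ⟨_, Finset.mem_image_of_mem v (hM.2 (hme.trans (hM.1 hi))),
    _, Finset.mem_image_of_mem v (hM.2 (hmf.trans (hM.1 hi))), ?_, ?_⟩
  · have hsign : IsUnit ((x i).sign : R) :=
      (Int.isUnit_iff_natAbs_eq.2 (Int.natAbs_sign_of_ne_zero hxi)).map (Int.castRingHom R)
    rw [hve, hvf]
    exact fun h => hne i (hsign.mul_left_cancel h)
  · rw [hve, hvf, ← mul_add, ← hrelz i]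
    ring

theorem prime_le_three_pow_of_weighted_relations {p : ℕ} [Fact p.Prime] [Nonempty ι] {k : ι → ℕ}
    {z : ι → ZMod p} (hy : ∀ i, |y i| ≤ 3 ^ k (e i)) (hw : ∀ i, |w i| ≤ 3 ^ k (f i))
    (hye : ∀ i, e i = i → 3 * |y i| ≤ 3 ^ k i) (hwf : ∀ i, f i = i → 3 * |w i| ≤ 3 ^ k i)
    (hrel : ∀ i, 2 * 3 ^ k i * z i = y i * z (e i) + w i * z (f i))
    (hne : ∀ i, y i * z (e i) ≠ w i * z (f i)) : p ≤ 3 ^ ∑ i, (k i + 1) := by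
  classical
  have hz : z ≠ 0 := by
    rintro rfl
    exact hne (Classical.arbitrary ι) (by simp)
  by_cases hdet : (threeTermMatrix (fun i => 2 * 3 ^ k i) y w e f).det = 0
  · obtain ⟨x, hx, hrelx⟩ := exists_ne_zero_of_det_threeTermMatrix_eq_zero hdet
    obtain ⟨I, hI, hbal, hcard⟩ := exists_isBalanced_of_weighted_relations (q := fun i => 3 ^ k i)
      (fun i => by positivity) hy hw hx hrelx (fun i => by exact_mod_cast hrel i) hne
    refine (hbal.prime_le_three_pow_card hI).trans (Nat.pow_le_pow_right three_pos ?_)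
    exact hcard.trans (by simp [Finset.sum_add_distrib])
  · refine prime_le_three_pow_of_det_threeTermMatrix_ne_zero (fun i => ?_) hy hw hye hwf hz
      (fun i => by exact_mod_cast hrel i) hdet
    rw [abs_of_pos (by positivity)]

end WeightedRelations

section OrbitsOfThree

theorem two_mul_orderOf_sq_le_card {F : Type*} [Field F] (h2 : (2 : F) ≠ 0)
    {T : Finset F} (hneg : ∀ x ∈ T, -x ∈ T) {g x : F} (hg : g ≠ 0) (hx : x ≠ 0)
    (horbit : ∀ j : ℕ, g ^ j * x ∈ T) : 2 * orderOf (g ^ 2) ≤ T.card := by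
  classical
  let H : Finset F := (Finset.range (orderOf (g ^ 2))).image fun j => g ^ j * x
  have index_eq {i j : ℕ} (hi : i < orderOf (g ^ 2)) (hj : j < orderOf (g ^ 2))
      (h : (g ^ i * x) ^ 2 = (g ^ j * x) ^ 2) : i = j := by
    refine pow_injOn_Iio_orderOf hi hj (mul_right_cancel₀ (pow_ne_zero 2 hx) ?_)
    linear_combination h
  have hH : H.card = orderOf (g ^ 2) := by
    rw [Finset.card_image_of_injOn, Finset.card_range]
    exact fun i hi j hj h => index_eq (by simpa using hi) (by simpa using hj)
      (congrArg (· ^ 2) h)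
  have hdisj : Disjoint H (H.image Neg.neg) := by
    simp only [H, Finset.image_image, Finset.disjoint_left, Finset.mem_image, Finset.mem_range,
      Function.comp_apply, not_exists, not_and]
    rintro _ ⟨i, hi, rfl⟩ j hj h
    obtain rfl := index_eq hj hi (by rw [← h, neg_sq])
    have hzero : 2 * (g ^ j * x) = 0 := by linear_combination -h
    exact mul_ne_zero h2 (mul_ne_zero (pow_ne_zero j hg) hx) hzero
  have hsub : H ∪ H.image Neg.neg ⊆ T := by
    simp only [H, Finset.union_subset_iff, Finset.image_subset_iff, Finset.forall_mem_image]
    exact ⟨fun j _ => horbit j, fun j _ => hneg _ (horbit j)⟩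
  calc 2 * orderOf (g ^ 2) = (H ∪ H.image Neg.neg).card := by
        rw [Finset.card_union_of_disjoint hdisj, Finset.card_image_of_injective _ neg_injective,
          hH, two_mul]
    _ ≤ T.card := Finset.card_le_card hsub

theorem ofNat_zmod_ne_zero {p m : ℕ} [m.AtLeastTwo] (hmp : m < p) :
    (OfNat.ofNat m : ZMod p) ≠ 0 := by
  rw [← Nat.cast_ofNat, Ne, ZMod.natCast_eq_zero_iff]
  exact Nat.not_dvd_of_pos_of_lt (Nat.pos_of_neZero m) hmp

variable {p : ℕ} [Fact p.Prime]

theorem prime_le_three_pow_of_three_pow_sq_eq_one (hp : p ≠ 2) {m : ℕ} (hm : 0 < m)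
    (h : ((3 : ZMod p) ^ m) ^ 2 = 1) : p ≤ 3 ^ m := by
  have hpodd : Odd p := (Fact.out : p.Prime).odd_of_ne_two hp
  have hodd : Odd (3 ^ m) := Odd.pow (by decide)
  have hone : 1 < 3 ^ m := Nat.one_lt_pow hm.ne' (by norm_num)
  rcases sq_eq_one_iff.1 h with h1 | h1
  · have hdvd : p ∣ 3 ^ m - 1 := by
      rw [← ZMod.natCast_eq_zero_iff, Nat.cast_sub hone.le]
      simp [h1]
    exact (Nat.le_of_dvd (by omega) hdvd).trans (Nat.sub_le _ _)
  · have hdvd : p ∣ 3 ^ m + 1 := by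
      rw [← ZMod.natCast_eq_zero_iff]
      simp [h1]
    have hle := Nat.le_of_dvd (by omega) hdvd
    have hne : p ≠ 3 ^ m + 1 := fun h => Nat.not_even_iff_odd.2 hpodd (h ▸ hodd.add_one)
    omega

theorem exists_pow_mul_notMem_of_eq_three_or_inv (hp : 3 < p) {T : Finset (ZMod p)} (hT0 : 0 ∉ T)
    (hneg : ∀ x ∈ T, -x ∈ T) (hlt : 3 ^ T.card < p ^ 2) {g : ZMod p} (hg : g = 3 ∨ g = 3⁻¹)
    {x : ZMod p} (hx : x ∈ T) : ∃ j : ℕ, g ^ j * x ∉ T := by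
  by_contra! horbit
  have h3 : (3 : ZMod p) ≠ 0 := ofNat_zmod_ne_zero hp
  have h2 : (2 : ZMod p) ≠ 0 := ofNat_zmod_ne_zero (Nat.lt_of_succ_lt hp)
  have hg0 : g ≠ 0 := by
    rcases hg with rfl | rfl
    exacts [h3, inv_ne_zero h3]
  set m := orderOf (g ^ 2) with hm
  have hmpos : 0 < m := orderOf_pos_iff.2 (isOfFinOrder_iff_isUnit.2 (pow_ne_zero 2 hg0).isUnit)
  have hpow : ((3 : ZMod p) ^ m) ^ 2 = 1 := by
    have hgm : (g ^ m) ^ 2 = 1 := by rw [pow_right_comm, hm, pow_orderOf_eq_one]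
    rcases hg with rfl | rfl
    · exact hgm
    · rwa [inv_pow, inv_pow, inv_eq_one] at hgm
  have hple := prime_le_three_pow_of_three_pow_sq_eq_one (by omega) hmpos hpow
  refine hlt.not_ge ?_
  calc p ^ 2 ≤ (3 ^ m) ^ 2 := Nat.pow_le_pow_left hple 2
    _ = 3 ^ (2 * m) := by rw [← pow_mul, mul_comm]
    _ ≤ 3 ^ T.card := Nat.pow_le_pow_right three_pos <|
        two_mul_orderOf_sq_le_card h2 hneg hg0 (ne_of_mem_of_not_mem hx hT0) horbit

end OrbitsOfThree

section Chains

variable {F : Type*} [Field F]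

/-- The exponent of the last element `g ^ k * z` of the chain in `T` that starts at `z`. If the
chain never leaves `T`, this is the junk value `0`. -/
noncomputable def chainLength (g : F) (T : Finset F) (z : F) : ℕ :=
  sInf {k | g ^ (k + 1) * z ∉ T}

variable {g : F} {T : Finset F}

theorem pow_mul_mem_of_le_chainLength {z : F} (hz : z ∈ T) {j : ℕ} (hj : j ≤ chainLength g T z) :
    g ^ j * z ∈ T := by
  cases j with
  | zero => simpa using hz
  | succ j => exact not_not.1 (Nat.notMem_of_lt_sInf hj)

theorem pow_chainLength_succ_mul_notMem {z : F} (hz : z ∈ T) (hesc : ∃ j : ℕ, g ^ j * z ∉ T) :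
    g ^ (chainLength g T z + 1) * z ∉ T := by
  obtain ⟨j, hj⟩ := hesc
  have hj0 : j ≠ 0 := by
    rintro rfl
    exact hj (by simpa using hz)
  exact Nat.sInf_mem (s := {k | g ^ (k + 1) * z ∉ T}) ⟨j - 1, by
    rwa [Set.mem_ofPred_eq, Nat.sub_add_cancel (Nat.pos_of_ne_zero hj0)]⟩

theorem chainLength_neg (hneg : ∀ x ∈ T, -x ∈ T) (z : F) :
    chainLength g T (-z) = chainLength g T z := by
  have hmem (x : F) : -x ∈ T ↔ x ∈ T := ⟨fun h => neg_neg x ▸ hneg _ h, hneg x⟩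
  simp only [chainLength, mul_neg, hmem]

variable [DecidableEq F]

/-- The starting points of the maximal chains `z, g * z, g ^ 2 * z, …` contained in `T`. -/
def chainRoots (g : F) (T : Finset F) : Finset F := {z ∈ T | g⁻¹ * z ∉ T}

theorem chainRoots_subset : chainRoots g T ⊆ T := Finset.filter_subset _ _

theorem sum_chainLength_succ_le_card (hg : g ≠ 0) :
    ∑ z ∈ chainRoots g T, (chainLength g T z + 1) ≤ T.card := by
  have no_overlap {i j : ℕ} {z w : F} (hz : z ∈ chainRoots g T) (hw : w ∈ chainRoots g T)
      (hj : j ≤ chainLength g T w) (h : g ^ i * z = g ^ j * w) : j ≤ i := by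
    by_contra! hij
    refine (Finset.mem_filter.1 hz).2 ?_
    have hz_eq : g⁻¹ * z = g ^ (j - i - 1) * w := by
      obtain ⟨d, rfl⟩ := Nat.exists_eq_add_of_lt hij
      refine mul_left_cancel₀ (pow_ne_zero (i + 1) hg) ?_
      rw [show i + d + 1 - i - 1 = d by omega, pow_succ, mul_assoc, mul_inv_cancel_left₀ hg, h]
      ring
    rw [hz_eq]
    exact pow_mul_mem_of_le_chainLength (chainRoots_subset hw) (by omega)
  calc ∑ z ∈ chainRoots g T, (chainLength g T z + 1)
      = ((chainRoots g T).sigma fun z => Finset.range (chainLength g T z + 1)).card := by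
        simp [Finset.card_sigma]
    _ ≤ T.card := by
        refine Finset.card_le_card_of_injOn (fun x => g ^ x.2 * x.1) ?_ ?_
        · rintro ⟨z, j⟩ hx
          simp only [Finset.coe_sigma, Set.mem_sigma_iff, Finset.mem_coe, Finset.mem_range] at hx
          exact pow_mul_mem_of_le_chainLength (chainRoots_subset hx.1) (Nat.lt_succ_iff.1 hx.2)
        · rintro ⟨z, i⟩ hx ⟨w, j⟩ hy h
          simp only [Finset.coe_sigma, Set.mem_sigma_iff, Finset.mem_coe, Finset.mem_range]
            at hx hy h
          obtain rfl : i = j := le_antisymm (no_overlap hy.1 hx.1 (by omega) h.symm)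
            (no_overlap hx.1 hy.1 (by omega) h)
          rw [mul_left_cancel₀ (pow_ne_zero i hg) h]

theorem exists_mem_chainRoots_eq_pow_mul (hg : g ≠ 0) {x : F} (hx : x ∈ T)
    (hescInv : ∃ j : ℕ, g⁻¹ ^ j * x ∉ T) (hesc : ∀ z ∈ T, ∃ j : ℕ, g ^ j * z ∉ T) :
    ∃ z ∈ chainRoots g T, ∃ j ≤ chainLength g T z, x = g ^ j * z := by
  set j := chainLength g⁻¹ T x
  have hmem {i : ℕ} (hi : i ≤ j) := pow_mul_mem_of_le_chainLength hx hi
  have hroot : g⁻¹ ^ j * x ∈ chainRoots g T := by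
    refine Finset.mem_filter.2 ⟨hmem le_rfl, ?_⟩
    rw [← mul_assoc, ← pow_succ']
    exact pow_chainLength_succ_mul_notMem hx hescInv
  refine ⟨_, hroot, j, ?_, ?_⟩
  · by_contra! hlt
    refine pow_chainLength_succ_mul_notMem (hmem le_rfl) (hesc _ (hmem le_rfl)) ?_
    have hback : g ^ (chainLength g T (g⁻¹ ^ j * x) + 1) * (g⁻¹ ^ j * x) =
        g⁻¹ ^ (j - (chainLength g T (g⁻¹ ^ j * x) + 1)) * x := by
      rw [inv_pow_sub₀ hg hlt, inv_pow, mul_left_comm, mul_assoc]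
    rw [hback]
    exact hmem (Nat.sub_le _ _)
  · rw [← mul_assoc, ← mul_pow, mul_inv_cancel₀ hg, one_pow, one_mul]

theorem neg_mem_chainRoots (hneg : ∀ x ∈ T, -x ∈ T) {z : F} (hz : z ∈ chainRoots g T) :
    -z ∈ chainRoots g T := by
  obtain ⟨hzT, hgz⟩ := Finset.mem_filter.1 hz
  refine Finset.mem_filter.2 ⟨hneg z hzT, fun h => hgz ?_⟩
  simpa using hneg _ h

end Chains

section SymmetricSets

variable {p : ℕ} [Fact p.Prime]

theorem valMinAbs_neg_pos_iff (hp : p ≠ 2) {x : ZMod p} (hx : x ≠ 0) :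
    0 < (-x).valMinAbs ↔ ¬ 0 < x.valMinAbs := by
  have hodd : Odd p := (Fact.out : p.Prime).odd_of_ne_two hp
  have hne : 2 * x.val ≠ p := fun h => Nat.not_even_iff_odd.2 hodd (h ▸ even_two_mul _)
  have hx0 : x.valMinAbs ≠ 0 := (ZMod.valMinAbs_eq_zero x).not.2 hx
  rw [ZMod.valMinAbs_neg_of_ne_half hne]
  omega

theorem sum_eq_two_mul_sum_filter_valMinAbs_pos (hp : p ≠ 2) {Z : Finset (ZMod p)} (hZ0 : 0 ∉ Z)
    (hneg : ∀ z ∈ Z, -z ∈ Z) {f : ZMod p → ℕ} (hf : ∀ z, f (-z) = f z) :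
    ∑ z ∈ Z, f z = 2 * ∑ z ∈ Z with 0 < z.valMinAbs, f z := by
  have hflip {z : ZMod p} (hz : z ∈ Z) := valMinAbs_neg_pos_iff hp (ne_of_mem_of_not_mem hz hZ0)
  have hreflect : ∑ z ∈ Z with ¬ 0 < z.valMinAbs, f z = ∑ z ∈ Z with 0 < z.valMinAbs, f z := by
    refine Finset.sum_nbij' Neg.neg Neg.neg ?_ ?_ (fun z _ => neg_neg z) (fun z _ => neg_neg z)
      (fun z _ => (hf z).symm)
    · intro z hz
      obtain ⟨hzZ, hpos⟩ := Finset.mem_filter.1 hz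
      exact Finset.mem_filter.2 ⟨hneg z hzZ, (hflip hzZ).2 hpos⟩
    · intro z hz
      obtain ⟨hzZ, hpos⟩ := Finset.mem_filter.1 hz
      exact Finset.mem_filter.2 ⟨hneg z hzZ, fun h => (hflip hzZ).1 h hpos⟩
  rw [← Finset.sum_filter_add_sum_filter_not Z (fun z => 0 < z.valMinAbs), hreflect, two_mul]

/-- The starting points of the chains in `T` under multiplication by `3`, one from each pair
`z`, `-z`. -/
noncomputable def halfChainRoots (T : Finset (ZMod p)) : Finset (ZMod p) :=
  {z ∈ chainRoots 3 T | 0 < z.valMinAbs}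

variable {T : Finset (ZMod p)}

theorem halfChainRoots_subset : halfChainRoots T ⊆ T :=
  (Finset.filter_subset _ _).trans chainRoots_subset

theorem mem_halfChainRoots_or_neg_mem (hp : p ≠ 2) (hT0 : 0 ∉ T) (hneg : ∀ x ∈ T, -x ∈ T)
    {z : ZMod p} (hz : z ∈ chainRoots 3 T) : z ∈ halfChainRoots T ∨ -z ∈ halfChainRoots T := by
  by_cases hpos : 0 < z.valMinAbs
  · exact .inl (Finset.mem_filter.2 ⟨hz, hpos⟩)
  · exact .inr (Finset.mem_filter.2 ⟨neg_mem_chainRoots hneg hz,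
      (valMinAbs_neg_pos_iff hp (ne_of_mem_of_not_mem (chainRoots_subset hz) hT0)).2 hpos⟩)

theorem two_mul_sum_chainLength_succ_le_card (hp : 3 < p) (hT0 : 0 ∉ T) (hneg : ∀ x ∈ T, -x ∈ T) :
    2 * ∑ z ∈ halfChainRoots T, (chainLength 3 T z + 1) ≤ T.card := by
  rw [halfChainRoots, ← sum_eq_two_mul_sum_filter_valMinAbs_pos (by omega)
    (fun h => hT0 (chainRoots_subset h)) (fun z hz => neg_mem_chainRoots hneg hz)
    (fun z => by rw [chainLength_neg hneg])]
  exact sum_chainLength_succ_le_card (ofNat_zmod_ne_zero hp)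

theorem exists_halfChainRoots_eq_intCast_mul (hp : 3 < p) (hT0 : 0 ∉ T) (hneg : ∀ x ∈ T, -x ∈ T)
    (hlt : 3 ^ T.card < p ^ 2) {t : ZMod p} (ht : t ∈ T) :
    ∃ d ∈ halfChainRoots T, ∃ j ≤ chainLength 3 T d, ∃ y : ℤ, |y| = 3 ^ j ∧ t = y * d := by
  obtain ⟨z, hz, j, hj, rfl⟩ := exists_mem_chainRoots_eq_pow_mul
    (ofNat_zmod_ne_zero hp) ht
    (exists_pow_mul_notMem_of_eq_three_or_inv hp hT0 hneg hlt (.inr rfl) ht)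
    (fun z => exists_pow_mul_notMem_of_eq_three_or_inv hp hT0 hneg hlt (.inl rfl))
  rcases mem_halfChainRoots_or_neg_mem (by omega) hT0 hneg hz with hd | hd
  · exact ⟨z, hd, j, hj, 3 ^ j, by simp, by push_cast; rfl⟩
  · exact ⟨-z, hd, j, by rwa [chainLength_neg hneg], -3 ^ j, by simp, by push_cast; ring⟩

theorem exists_coeff_of_ne_chain_end (hp : 3 < p) (hT0 : 0 ∉ T) (hneg : ∀ x ∈ T, -x ∈ T)
    (hlt : 3 ^ T.card < p ^ 2) (c : halfChainRoots T) {t : ZMod p} (ht : t ∈ insert 0 T)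
    (hts : t ≠ 3 ^ chainLength 3 T c * c) (htns : t ≠ -(3 ^ chainLength 3 T c * c)) :
    ∃ (d : halfChainRoots T) (y : ℤ), |y| ≤ 3 ^ chainLength 3 T d ∧
      (d = c → 3 * |y| ≤ 3 ^ chainLength 3 T c) ∧ t = y * d := by
  rcases Finset.mem_insert.1 ht with rfl | htT
  · exact ⟨c, 0, by simp, by simp, by simp⟩
  obtain ⟨d, hd, j, hj, y, hy, rfl⟩ :=
    exists_halfChainRoots_eq_intCast_mul hp hT0 hneg hlt htT
  refine ⟨⟨d, hd⟩, y, hy ▸ pow_le_pow_right₀ (by norm_num) hj, ?_, rfl⟩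
  rintro rfl
  have hjne : j ≠ chainLength 3 T d := by
    rintro rfl
    rcases (abs_eq (by positivity)).1 hy with rfl | rfl
    · exact hts (by push_cast; rfl)
    · exact htns (by push_cast; ring)
  rw [hy, ← pow_succ']
  exact pow_le_pow_right₀ (by norm_num) (hj.lt_of_ne hjne)

theorem three_mul_chain_end_notMem (hp : 3 < p) (hT0 : 0 ∉ T) (hneg : ∀ x ∈ T, -x ∈ T)
    (hlt : 3 ^ T.card < p ^ 2) {z : ZMod p} (hz : z ∈ T) :
    3 * (3 ^ chainLength 3 T z * z) ∉ insert 0 T := by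
  have hend : 3 ^ chainLength 3 T z * z ∈ T := pow_mul_mem_of_le_chainLength hz le_rfl
  rw [Finset.mem_insert, not_or]
  refine ⟨mul_ne_zero (ofNat_zmod_ne_zero hp) (ne_of_mem_of_not_mem hend hT0), ?_⟩
  rw [← mul_assoc, ← pow_succ']
  exact pow_chainLength_succ_mul_notMem hz
    (exists_pow_mul_notMem_of_eq_three_or_inv hp hT0 hneg hlt (.inl rfl) hz)

theorem sq_le_three_pow_card_of_midpoints (hp : 3 < p) (hT0 : 0 ∉ T) (hneg : ∀ x ∈ T, -x ∈ T)
    (hne : T.Nonempty)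
    (hmid : ∀ s ∈ T, ∃ t ∈ insert 0 T, ∃ u ∈ insert 0 T, t ≠ u ∧ t + u = 2 * s) :
    p ^ 2 ≤ 3 ^ T.card := by
  by_contra! hlt
  set s : halfChainRoots T → ZMod p := fun c => 3 ^ chainLength 3 T c * c
  have hsT (c : halfChainRoots T) : s c ∈ T :=
    pow_mul_mem_of_le_chainLength (halfChainRoots_subset c.2) le_rfl
  have hend (c : halfChainRoots T) : 3 * s c ∉ insert 0 T :=
    three_mul_chain_end_notMem hp hT0 hneg hlt (halfChainRoots_subset c.2)
  choose t ht u hu htu hsum using fun c => hmid (s c) (hsT c)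
  choose e y hy hye hty using fun c =>
    exists_coeff_of_ne_chain_end hp hT0 hneg hlt c (ht c)
      (fun h => htu c (by linear_combination 2 * h - hsum c))
      (fun h => hend c (by convert hu c using 1; linear_combination h - hsum c))
  choose f w hw hwf huw using fun c =>
    exists_coeff_of_ne_chain_end hp hT0 hneg hlt c (hu c)
      (fun h => htu c (by linear_combination hsum c - 2 * h))
      (fun h => hend c (by convert ht c using 1; linear_combination h - hsum c))
  have hHne : Nonempty (halfChainRoots T) := by
    obtain ⟨x, hx⟩ := hne
    obtain ⟨d, hd, -⟩ := exists_halfChainRoots_eq_intCast_mul hp hT0 hneg hlt hx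
    exact ⟨d, hd⟩
  have hple : p ≤ 3 ^ ∑ c : halfChainRoots T, (chainLength 3 T c + 1) :=
    prime_le_three_pow_of_weighted_relations (z := Subtype.val) hy hw hye hwf
      (fun c => by rw [← hty, ← huw, hsum]; ring) (fun c => by rw [← hty, ← huw]; exact htu c)
  rw [Finset.sum_coe_sort (halfChainRoots T) fun c => chainLength 3 T c + 1] at hple
  refine hlt.not_ge ?_
  calc p ^ 2 ≤ (3 ^ ∑ c ∈ halfChainRoots T, (chainLength 3 T c + 1)) ^ 2 :=
        Nat.pow_le_pow_left hple 2
    _ = 3 ^ (2 * ∑ c ∈ halfChainRoots T, (chainLength 3 T c + 1)) := by rw [← pow_mul, mul_comm]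
    _ ≤ 3 ^ T.card :=
        Nat.pow_le_pow_right three_pos (two_mul_sum_chainLength_succ_le_card hp hT0 hneg)

end SymmetricSets

section SymmetricSupport

variable {p : ℕ} [Fact p.Prime]

-- The set of nonzero `k` with `h + k ∈ S` is one to which the midpoint bound applies: the
-- difference `2 * k` of `h + k` and `h - k` occurs a second time.
theorem subset_singleton_of_symmetric_of_repeated_differences (hp : 3 < p) {S : Finset (ZMod p)}
    {h : ZMod p} (hsymm : ∀ i ∈ S, 2 * h - i ∈ S)
    (hrep : ∀ x ≠ 0, ∀ i ∈ S, i + x ∈ S → ∃ j ∈ S, j ≠ i ∧ j + x ∈ S)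
    (hlt : 3 ^ S.card < p ^ 2) : S ⊆ {h} := by
  have h2 : (2 : ZMod p) ≠ 0 := ofNat_zmod_ne_zero (Nat.lt_of_succ_lt hp)
  let T : Finset (ZMod p) := {k | k ≠ 0 ∧ h + k ∈ S}
  have hT {k : ZMod p} : k ∈ T ↔ k ≠ 0 ∧ h + k ∈ S := by simp [T]
  have hTcard : T.card ≤ S.card :=
    Finset.card_le_card_of_injOn (h + ·) (fun k hk => (hT.1 hk).2) (add_right_injective h).injOn
  have hmemT {i : ZMod p} (hi : i ∈ S) : i - h ∈ insert 0 T := by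
    rw [Finset.mem_insert, hT, add_sub_cancel]
    tauto
  have hneg : ∀ k ∈ T, -k ∈ T := fun k hk => by
    refine hT.2 ⟨neg_ne_zero.2 (hT.1 hk).1, ?_⟩
    convert hsymm _ (hT.1 hk).2 using 1
    ring
  have hempty : ¬ T.Nonempty := fun hne => by
    have hle := sq_le_three_pow_card_of_midpoints hp (fun h0 => (hT.1 h0).1 rfl) hneg hne ?_
    · exact hlt.not_ge (hle.trans (Nat.pow_le_pow_right three_pos hTcard))
    intro s hs
    obtain ⟨j, hj, hjs, hjS⟩ := hrep (2 * s) (mul_ne_zero h2 (hT.1 hs).1) (h + -s)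
      (hT.1 (hneg s hs)).2 (by convert (hT.1 hs).2 using 1; ring)
    refine ⟨j + 2 * s - h, hmemT hjS, 2 * h - j - h, hmemT (hsymm j hj), fun heq => hjs ?_, by ring⟩
    exact mul_left_cancel₀ h2 (by linear_combination heq)
  intro i hi
  rcases Finset.mem_insert.1 (hmemT hi) with hih | hih
  · exact Finset.mem_singleton.2 (sub_eq_zero.1 hih)
  · exact absurd ⟨_, hih⟩ hempty

end SymmetricSupport

section TrivialRelations

variable {p : ℕ} [Fact p.Prime] {K : Type*} [Field K]

/-- The values of the additive character `e` satisfy, over the ring `B`, only the multiples of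
the relation `∑ i, e i = 0`. -/
def OnlyTrivialRelations (e : AddChar (ZMod p) K) (B : Subalgebra ℤ K) : Prop :=
  ∀ f : ZMod p → K, (∀ i, f i ∈ B) → ∑ i, f i * e i = 0 → ∀ i j, f i = f j

variable {e : AddChar (ZMod p) K} {B : Subalgebra ℤ K}

-- Applying the `σ` gives `∑ i, f i * e (d * i) = 0` for all `d ≠ 0`; invert the Fourier transform.
theorem onlyTrivialRelations_of_exists_ringHom [CharZero K] (he : e.IsPrimitive)
    (hσ : ∀ d ≠ 0, ∃ σ : K →+* K, (∀ x, σ (e x) = e (d * x)) ∧ ∀ x ∈ B, σ x = x) :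
    OnlyTrivialRelations e B := by
  intro f hf hrel
  have htransform (d : ZMod p) (hd : d ≠ 0) : ∑ i, f i * e (d * i) = 0 := by
    obtain ⟨σ, hσe, hσB⟩ := hσ d hd
    simpa only [map_sum, map_mul, map_zero, hσe, hσB _ (hf _)] using congrArg σ hrel
  have hinversion (j : ZMod p) : ∑ i, f i = (p : K) * f j := by
    calc ∑ i, f i = ∑ d, e (d * -j) * ∑ i, f i * e (d * i) := by
          symm
          rw [Fintype.sum_eq_single 0 fun d hd => by rw [htransform d hd, mul_zero]]
          simp
      _ = ∑ i, f i * ∑ d, e (d * (i - j)) := by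
          simp_rw [Finset.mul_sum]
          rw [Finset.sum_comm]
          refine Finset.sum_congr rfl fun i _ => Finset.sum_congr rfl fun d _ => ?_
          rw [mul_sub, sub_eq_add_neg, AddChar.map_add_eq_mul, mul_neg]
          ring
      _ = (p : K) * f j := by
          simp [AddChar.sum_mulShift _ he, sub_eq_zero, mul_comm]
  intro i j
  have hp0 : (p : K) ≠ 0 := Nat.cast_ne_zero.2 (Fact.out : p.Prime).ne_zero
  exact mul_left_cancel₀ hp0 ((hinversion i).symm.trans (hinversion j))

theorem OnlyTrivialRelations.eq_of_sum_eq (hB : OnlyTrivialRelations e B) {f g : ZMod p → K}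
    (hf : ∀ i, f i ∈ B) (hg : ∀ i, g i ∈ B) (hsum : ∑ i, f i * e i = ∑ i, g i * e i)
    {i₀ : ZMod p} (hi₀ : f i₀ = g i₀) : f = g := by
  have hconst := hB (f - g) (fun i => B.sub_mem (hf i) (hg i))
    (by simp [sub_mul, hsum])
  ext i
  exact sub_eq_zero.1 ((hconst i i₀).trans (sub_eq_zero.2 hi₀))

end TrivialRelations

section Autocorrelation

variable {p : ℕ} [NeZero p] {K : Type*} [Field K]

/-- The autocorrelation of the coefficient family `a` with respect to the conjugation `c`. -/
def autocorrelation (c : K →+* K) (a : ZMod p → K) (x : ZMod p) : K :=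
  ∑ i, a (i + x) * c (a i)

variable {c : K →+* K}

theorem sum_autocorrelation_mul {e : AddChar (ZMod p) K} (hce : ∀ x, c (e x) = e (-x))
    (a : ZMod p → K) :
    ∑ x, autocorrelation c a x * e x = (∑ i, a i * e i) * c (∑ i, a i * e i) := by
  simp only [autocorrelation, map_sum, map_mul, hce, Finset.sum_mul, Finset.mul_sum]
  rw [Finset.sum_comm]
  refine Finset.sum_congr rfl fun i _ => ?_
  refine Fintype.sum_equiv (Equiv.addLeft i) _ _ fun x => ?_
  have hex : e x = e (i + x) * e (-i) := by rw [← AddChar.map_add_eq_mul, add_neg_cancel_comm]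
  rw [hex, mul_mul_mul_comm, Equiv.coe_addLeft]

theorem sum_autocorrelation (c : K →+* K) (a : ZMod p → K) :
    ∑ x, autocorrelation c a x = (∑ i, a i) * c (∑ i, a i) := by
  simpa using sum_autocorrelation_mul (c := c) (e := (1 : AddChar (ZMod p) K)) (by simp) a

theorem sum_sub_mul_map_sub (c : K →+* K) (a : ZMod p → K) :
    ∑ i, ∑ j, (a i - a j) * c (a i - a j) =
      2 * (p * autocorrelation c a 0 - ∑ x, autocorrelation c a x) := by
  rw [sum_autocorrelation]
  simp only [autocorrelation, add_zero, map_sub, map_sum, sub_mul, mul_sub,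
    Finset.sum_sub_distrib, Finset.sum_const, Finset.card_univ, ZMod.card, nsmul_eq_mul,
    ← Finset.mul_sum, ← Finset.sum_mul]
  ring

end Autocorrelation

section Parseval

variable {p : ℕ} [Fact p.Prime] {K : Type*} [Field K] {e : AddChar (ZMod p) K}
  {B : Subalgebra ℤ K} {c : K →+* K} {a : ZMod p → K} {N : K}

theorem autocorrelation_mem (hcB : ∀ x ∈ B, c x ∈ B) (ha : ∀ i, a i ∈ B) (x : ZMod p) :
    autocorrelation c a x ∈ B :=
  B.sum_mem fun i _ => B.mul_mem (ha _) (hcB _ (ha i))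

theorem autocorrelation_eq_sub (hB : OnlyTrivialRelations e B) (hce : ∀ x, c (e x) = e (-x))
    (hcB : ∀ x ∈ B, c x ∈ B) (ha : ∀ i, a i ∈ B) (hN : N ∈ B)
    (hY : (∑ i, a i * e i) * c (∑ i, a i * e i) = N) {x : ZMod p} (hx : x ≠ 0) :
    autocorrelation c a x = autocorrelation c a 0 - N := by
  have hconst := hB (fun x => autocorrelation c a x - if x = 0 then N else 0)
    (fun x => B.sub_mem (autocorrelation_mem hcB ha x) (by split_ifs <;> simp [hN]))
    (by simp [sub_mul, Finset.sum_sub_distrib, sum_autocorrelation_mul hce, -map_sum, hY])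
  simpa [hx] using hconst x 0

theorem sum_sub_mul_map_sub_eq (hB : OnlyTrivialRelations e B) (hce : ∀ x, c (e x) = e (-x))
    (hcB : ∀ x ∈ B, c x ∈ B) (ha : ∀ i, a i ∈ B) (hN : N ∈ B)
    (hY : (∑ i, a i * e i) * c (∑ i, a i * e i) = N) :
    ∑ i, ∑ j, (a i - a j) * c (a i - a j) = 2 * (p - 1) * N := by
  have hsum : ∑ x, autocorrelation c a x = p * autocorrelation c a 0 - (p - 1) * N := by
    rw [← Finset.add_sum_erase _ _ (Finset.mem_univ (0 : ZMod p)), Finset.sum_congr rfl fun x hx =>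
      autocorrelation_eq_sub hB hce hcB ha hN hY (Finset.ne_of_mem_erase hx)]
    rw [Finset.sum_const, Finset.card_erase_of_mem (Finset.mem_univ _), Finset.card_univ,
      ZMod.card, nsmul_eq_mul, Nat.cast_pred (Fact.out : p.Prime).pos]
    ring
  rw [sum_sub_mul_map_sub, hsum]
  ring

end Parseval

section Trace

variable {K : Type*} [Field K] [NumberField K]

theorem one_le_prod_norm_sq_of_isIntegral {x : K} (hx : IsIntegral ℤ x) (hx0 : x ≠ 0) :
    1 ≤ ∏ τ : K →ₐ[ℚ] ℂ, ‖τ x‖ ^ 2 := by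
  obtain ⟨m, hm⟩ := IsIntegrallyClosed.isIntegral_iff.1 (Algebra.isIntegral_norm ℚ hx)
  have hm0 : m ≠ 0 := by
    rintro rfl
    exact hx0 (Algebra.norm_eq_zero_iff.1 (hm.symm.trans (map_zero _)))
  have hm1 : (1 : ℝ) ≤ |(m : ℝ)| := mod_cast Int.one_le_abs hm0
  rw [Finset.prod_pow, ← norm_prod, ← Algebra.norm_eq_prod_embeddings ℚ ℂ x, ← hm]
  simpa using hm1

theorem card_le_sum_norm_sq_of_isIntegral {x : K} (hx : IsIntegral ℤ x) (hx0 : x ≠ 0) :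
    (Fintype.card (K →ₐ[ℚ] ℂ) : ℝ) ≤ ∑ τ : K →ₐ[ℚ] ℂ, ‖τ x‖ ^ 2 := by
  have hexp := (one_le_prod_norm_sq_of_isIntegral hx hx0).trans
    (prod_le_exp_sum_sub_card fun τ => sq_nonneg ‖τ x‖)
  exact sub_nonneg.1 (Real.one_le_exp_iff.1 hexp)

theorem card_filter_ne_zero_le_of_sum_norm_sq_le {ι : Type*} [Fintype ι] [DecidableEq K] {x : ι → K}
    (hx : ∀ i, IsIntegral ℤ (x i)) {M : ℝ} (hM : ∀ τ : K →ₐ[ℚ] ℂ, ∑ i, ‖τ (x i)‖ ^ 2 ≤ M) :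
    ((Finset.univ.filter fun i => x i ≠ 0).card : ℝ) ≤ M := by
  have hpos : 0 < (Fintype.card (K →ₐ[ℚ] ℂ) : ℝ) :=
    Nat.cast_pos.2 (Fintype.card_pos_iff.2 ⟨IsAlgClosed.lift⟩)
  refine le_of_mul_le_mul_right ?_ hpos
  calc ((Finset.univ.filter fun i => x i ≠ 0).card : ℝ) * Fintype.card (K →ₐ[ℚ] ℂ)
      = ∑ i with x i ≠ 0, (Fintype.card (K →ₐ[ℚ] ℂ) : ℝ) := by
        rw [Finset.sum_const, nsmul_eq_mul]
    _ ≤ ∑ i with x i ≠ 0, ∑ τ : K →ₐ[ℚ] ℂ, ‖τ (x i)‖ ^ 2 := Finset.sum_le_sum fun i hi =>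
        card_le_sum_norm_sq_of_isIntegral (hx i) (Finset.mem_filter.1 hi).2
    _ ≤ ∑ i, ∑ τ : K →ₐ[ℚ] ℂ, ‖τ (x i)‖ ^ 2 :=
        Finset.sum_le_sum_of_subset_of_nonneg (Finset.filter_subset _ _)
          fun i _ _ => by positivity
    _ = ∑ τ : K →ₐ[ℚ] ℂ, ∑ i, ‖τ (x i)‖ ^ 2 := Finset.sum_comm
    _ ≤ M * Fintype.card (K →ₐ[ℚ] ℂ) := by
        refine (Finset.sum_le_sum fun τ _ => hM τ).trans_eq ?_
        rw [Finset.sum_const, Finset.card_univ, nsmul_eq_mul, mul_comm]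

end Trace

section MajorityValue

theorem le_of_mul_sub_le_mul_pred {n m P : ℕ} (hP : n ^ 2 + n + 2 ≤ P) (hm : m ≤ 2 * n)
    (h : m * (P - m) ≤ (P - 1) * n) : m ≤ n := by
  by_contra! hnm
  have hmP : m ≤ P := by nlinarith
  zify [hmP, show 1 ≤ P by omega] at *
  have hP' : ((m : ℤ) - n) * (n ^ 2 + n + 2) ≤ (m - n) * P :=
    mul_le_mul_of_nonneg_left hP (by linarith)
  have hexcess : 0 ≤ ((m : ℤ) - n - 1) * ((n - 1) ^ 2 + (2 * n - m)) :=
    mul_nonneg (by linarith) (by nlinarith)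
  linarith

variable {ι α : Type*} [Fintype ι] [DecidableEq α]

theorem card_filter_ne_mul_card_compl_le (a : ι → α) (i₀ : ι) :
    2 * ((Finset.univ.filter fun j => a j ≠ a i₀).card *
        (Fintype.card ι - (Finset.univ.filter fun j => a j ≠ a i₀).card)) ≤
      (Finset.univ.filter fun z : ι × ι => a z.1 ≠ a z.2).card := by
  classical
  set S := Finset.univ.filter fun j => a j ≠ a i₀ with hS
  have hmem {j : ι} : j ∈ S ↔ a j ≠ a i₀ := by simp [hS]
  have hdisj : Disjoint (S ×ˢ Sᶜ) (Sᶜ ×ˢ S) :=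
    Finset.disjoint_product.2 (Or.inl disjoint_compl_right)
  calc 2 * (S.card * (Fintype.card ι - S.card)) = ((S ×ˢ Sᶜ) ∪ (Sᶜ ×ˢ S)).card := by
        rw [Finset.card_union_of_disjoint hdisj, Finset.card_product, Finset.card_product,
          Finset.card_compl]
        ring
    _ ≤ _ := by
        refine Finset.card_le_card fun z hz => ?_
        simp only [Finset.mem_union, Finset.mem_product, Finset.mem_compl, hmem, ne_eq,
          not_not] at hz
        simp only [Finset.mem_filter_univ]
        grind

theorem exists_card_filter_ne_le (a : ι → α) {n : ℕ} (hn : n ^ 2 + n + 2 ≤ Fintype.card ι)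
    (hpairs : (Finset.univ.filter fun z : ι × ι => a z.1 ≠ a z.2).card ≤
      2 * (Fintype.card ι - 1) * n) :
    ∃ i₀, (Finset.univ.filter fun j => a j ≠ a i₀).card ≤ n := by
  have hne : Nonempty ι := Fintype.card_pos_iff.1 (by omega)
  obtain ⟨i₀, -, hi₀⟩ : ∃ i₀ ∈ Finset.univ,
      (Finset.univ.filter fun j => a j ≠ a i₀).card ≤ 2 * n := by
    refine Finset.exists_le_of_sum_le Finset.univ_nonempty ?_
    calc ∑ i, (Finset.univ.filter fun j => a j ≠ a i).card
        = (Finset.univ.filter fun z : ι × ι => a z.1 ≠ a z.2).card := by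
          simp only [Finset.card_filter, Fintype.sum_prod_type_right]
      _ ≤ _ := hpairs
      _ ≤ Fintype.card ι * (2 * n) := by
          rw [mul_right_comm, mul_comm]
          exact Nat.mul_le_mul_right _ (Nat.sub_le _ _)
      _ = ∑ i : ι, 2 * n := by simp
  refine ⟨i₀, le_of_mul_sub_le_mul_pred hn hi₀ ?_⟩
  have := (card_filter_ne_mul_card_compl_le a i₀).trans hpairs
  rwa [mul_assoc, mul_le_mul_iff_right₀ two_pos] at this

end MajorityValue

section SmallSupport

variable {p : ℕ} [Fact p.Prime] {K : Type*} [Field K] {e : AddChar (ZMod p) K}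
  {B : Subalgebra ℤ K}

theorem OnlyTrivialRelations.sum_eq_zero [CharZero K] (hB : OnlyTrivialRelations e B) :
    ∑ i, e i = 0 := by
  refine AddChar.sum_eq_zero_of_ne_one ?_
  rintro rfl
  have hconst := hB (Pi.single 0 1 - Pi.single 1 1)
    (fun i => B.sub_mem (by by_cases h : i = 0 <;> simp [h]) (by by_cases h : i = 1 <;> simp [h]))
    (by simp) 0 1
  norm_num at hconst

-- Among the translates of `a` by constants, which all represent the same element, one vanishes at
-- most places: the differences `a i - a j` are integral, so Parseval leaves few nonzero ones.
theorem exists_coeff_card_ne_zero_le [NumberField K] [DecidableEq K] {c : K →+* K} {a : ZMod p → K}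
    {n : ℕ} (hB : OnlyTrivialRelations e B) (hBint : ∀ x ∈ B, IsIntegral ℤ x)
    (hce : ∀ x, c (e x) = e (-x)) (hcB : ∀ x ∈ B, c x ∈ B)
    (hcτ : ∀ (τ : K →ₐ[ℚ] ℂ) x, τ (c x) = starRingEnd ℂ (τ x)) (ha : ∀ i, a i ∈ B)
    (hn : n ^ 2 + n + 2 ≤ p) (hY : (∑ i, a i * e i) * c (∑ i, a i * e i) = n) :
    ∃ a' : ZMod p → K, (∀ i, a' i ∈ B) ∧ ∑ i, a' i * e i = ∑ i, a i * e i ∧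
      (Finset.univ.filter fun i => a' i ≠ 0).card ≤ n := by
  have hparseval (τ : K →ₐ[ℚ] ℂ) :
      ∑ z : ZMod p × ZMod p, ‖τ (a z.1 - a z.2)‖ ^ 2 = 2 * (p - 1) * n := by
    have hτ := congrArg τ (sum_sub_mul_map_sub_eq hB hce hcB ha (B.natCast_mem n) hY)
    simp only [map_sum, map_mul, hcτ, Complex.mul_conj, Complex.normSq_eq_norm_sq, map_ofNat,
      map_sub τ (p : K), map_natCast, map_one] at hτ
    rw [Fintype.sum_prod_type]
    exact_mod_cast hτ
  have hpairs : (Finset.univ.filter fun z : ZMod p × ZMod p => a z.1 ≠ a z.2).card ≤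
      2 * (Fintype.card (ZMod p) - 1) * n := by
    have hcard := card_filter_ne_zero_le_of_sum_norm_sq_le
      (fun z : ZMod p × ZMod p => hBint _ (B.sub_mem (ha z.1) (ha z.2)))
      fun τ => (hparseval τ).le
    simp only [ne_eq, sub_eq_zero] at hcard
    rw [ZMod.card, ← Nat.cast_le (α := ℝ)]
    simpa [Nat.cast_pred (Fact.out : p.Prime).pos] using hcard
  obtain ⟨i₀, hi₀⟩ := exists_card_filter_ne_le a (by rwa [ZMod.card]) hpairs
  refine ⟨fun i => a i - a i₀, fun i => B.sub_mem (ha i) (ha i₀), ?_, ?_⟩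
  · simp [sub_mul, ← Finset.mul_sum, hB.sum_eq_zero]
  · simpa only [ne_eq, sub_eq_zero] using hi₀

end SmallSupport

section Descent

variable {p : ℕ} [Fact p.Prime] {K : Type*} [Field K] {e : AddChar (ZMod p) K}
  {B : Subalgebra ℤ K} {a : ZMod p → K}

theorem exists_ne_zero_autocorrelation_eq_zero [DecidableEq K] (c : K →+* K)
    (hp : (Finset.univ.filter fun i => a i ≠ 0).card ^ 2 + 1 < p) :
    ∃ x ≠ 0, autocorrelation c a x = 0 := by
  set S := Finset.univ.filter fun i => a i ≠ 0 with hS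
  have hcard : (insert 0 ((S ×ˢ S).image fun z => z.1 - z.2)).card <
      (Finset.univ : Finset (ZMod p)).card := by
    rw [Finset.card_univ, ZMod.card]
    refine (Finset.card_insert_le _ _).trans_lt (lt_of_le_of_lt ?_ hp)
    refine Nat.succ_le_succ (Finset.card_image_le.trans_eq ?_)
    rw [Finset.card_product, sq]
  obtain ⟨x, -, hx⟩ := Finset.exists_mem_notMem_of_card_lt_card hcard
  simp only [Finset.mem_insert, Finset.mem_image, Finset.mem_product, not_or, not_exists] at hx
  refine ⟨x, hx.1, Finset.sum_eq_zero fun i _ => ?_⟩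
  by_contra hne
  have hi : a i ≠ 0 := fun h0 => hne (by rw [h0, map_zero, mul_zero])
  exact hx.2 (i + x, i) ⟨⟨by simpa [hS] using left_ne_zero_of_mul hne, by simpa [hS] using hi⟩,
    add_sub_cancel_left i x⟩

theorem exists_ne_add_ne_zero_of_autocorrelation_eq_zero {c : K →+* K} {x i : ZMod p}
    (hx : autocorrelation c a x = 0) (hi : a i ≠ 0) (hix : a (i + x) ≠ 0) :
    ∃ j ≠ i, a j ≠ 0 ∧ a (j + x) ≠ 0 := by
  by_contra! hunique
  rw [autocorrelation, Fintype.sum_eq_single i] at hx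
  · exact mul_ne_zero hix ((map_ne_zero c).2 hi) hx
  · intro j hj
    by_cases hj0 : a j = 0
    · rw [hj0, map_zero, mul_zero]
    · rw [hunique j hj hj0, zero_mul]

theorem map_coeff_neg_eq_mul_coeff_sub [DecidableEq K] (hB : OnlyTrivialRelations e B)
    {ψ : K →+* K} (hψe : ∀ x, ψ (e x) = e (-x)) (hψB : ∀ x ∈ B, ψ x ∈ B)
    (ha : ∀ i, a i ∈ B) {w : K} (hw : w ∈ B) {s : ZMod p}
    (hψY : ψ (∑ i, a i * e i) = w * e s * ∑ i, a i * e i)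
    (hp : 2 * (Finset.univ.filter fun i => a i ≠ 0).card < p) (i : ZMod p) :
    ψ (a (-i)) = w * a (i - s) := by
  set S := Finset.univ.filter fun i => a i ≠ 0 with hS
  have hsum : ∑ i, ψ (a (-i)) * e i = ∑ i, w * a (i - s) * e i := by
    calc ∑ i, ψ (a (-i)) * e i = ψ (∑ i, a i * e i) := by
          rw [map_sum, ← Equiv.sum_comp (Equiv.neg (ZMod p))]
          simp [hψe]
      _ = ∑ i, w * e s * (a i * e i) := by rw [hψY, Finset.mul_sum]
      _ = ∑ i, w * a (i - s) * e i := by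
          refine Fintype.sum_equiv (Equiv.addRight s) _ _ fun i => ?_
          rw [Equiv.coe_addRight, add_sub_cancel_right, AddChar.map_add_eq_mul]
          ring
  have hcard : ((S.image fun i => -i) ∪ S.image fun i => i + s).card <
      (Finset.univ : Finset (ZMod p)).card := by
    rw [Finset.card_univ, ZMod.card]
    refine (Finset.card_union_le _ _).trans_lt (lt_of_le_of_lt ?_ hp)
    rw [two_mul]
    exact add_le_add Finset.card_image_le Finset.card_image_le
  obtain ⟨y, -, hy⟩ := Finset.exists_mem_notMem_of_card_lt_card hcard
  simp only [Finset.mem_union, Finset.mem_image, not_or, not_exists, not_and] at hy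
  have hy₁ : a (-y) = 0 := by
    by_contra h0
    exact hy.1 (-y) (by simpa [hS] using h0) (neg_neg y)
  have hy₂ : a (y - s) = 0 := by
    by_contra h0
    exact hy.2 (y - s) (by simpa [hS] using h0) (sub_add_cancel y s)
  exact congrFun (hB.eq_of_sum_eq (fun i => hψB _ (ha _)) (fun i => B.mul_mem hw (ha _)) hsum
    (show ψ (a (-y)) = w * a (y - s) by rw [hy₁, hy₂, map_zero, mul_zero])) i

theorem exists_eq_mul_of_map_eq [NumberField K] {c ψ : K →+* K} {n : ℕ}
    (hB : OnlyTrivialRelations e B) (hBint : ∀ x ∈ B, IsIntegral ℤ x)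
    (hce : ∀ x, c (e x) = e (-x)) (hcB : ∀ x ∈ B, c x ∈ B)
    (hcτ : ∀ (τ : K →ₐ[ℚ] ℂ) x, τ (c x) = starRingEnd ℂ (τ x))
    (hψe : ∀ x, ψ (e x) = e (-x)) (hψB : ∀ x ∈ B, ψ x ∈ B)
    (ha : ∀ i, a i ∈ B) (hY : (∑ i, a i * e i) * c (∑ i, a i * e i) = n)
    {w : K} (hw : w ∈ B) {s : ZMod p} (hψY : ψ (∑ i, a i * e i) = w * e s * ∑ i, a i * e i)
    (hp : 3 < p) (hn : n ^ 2 + n + 2 ≤ p) (hn3 : 3 ^ n < p ^ 2) :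
    ∃ b ∈ B, ∃ h, ∑ i, a i * e i = b * e h := by
  classical
  obtain ⟨a', ha', hsum, hcard⟩ := exists_coeff_card_ne_zero_le hB hBint hce hcB hcτ ha hn hY
  rw [← hsum] at hY hψY ⊢
  set S := Finset.univ.filter fun i => a' i ≠ 0 with hS
  have hmem {i : ZMod p} : i ∈ S ↔ a' i ≠ 0 := by simp [hS]
  have hreflect := map_coeff_neg_eq_mul_coeff_sub hB hψe hψB ha' hw hψY (by nlinarith)
  have hauto (x : ZMod p) (hx : x ≠ 0) : autocorrelation c a' x = 0 := by
    obtain ⟨y, hy, hy0⟩ := exists_ne_zero_autocorrelation_eq_zero (a := a') c (by nlinarith)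
    rw [← hy0, autocorrelation_eq_sub hB hce hcB ha' (B.natCast_mem n) hY hx,
      autocorrelation_eq_sub hB hce hcB ha' (B.natCast_mem n) hY hy]
  have hsub : S ⊆ {-s / 2} := by
    refine subset_singleton_of_symmetric_of_repeated_differences hp (fun i hi => ?_) ?_
      ((Nat.pow_le_pow_right three_pos hcard).trans_lt hn3)
    · have h2 : (2 : ZMod p) ≠ 0 := ofNat_zmod_ne_zero (Nat.lt_of_succ_lt hp)
      have hi' := (map_ne_zero ψ).2 (hmem.1 hi)
      rw [← neg_neg i, hreflect] at hi'
      convert hmem.2 (right_ne_zero_of_mul hi') using 1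
      rw [mul_div_cancel₀ _ h2]
      ring
    · intro x hx i hi hix
      obtain ⟨j, hji, hj, hjx⟩ := exists_ne_add_ne_zero_of_autocorrelation_eq_zero (hauto x hx)
        (hmem.1 hi) (hmem.1 hix)
      exact ⟨j, hmem.2 hj, hji, hmem.2 hjx⟩
  refine ⟨a' (-s / 2), ha' _, -s / 2, Fintype.sum_eq_single _ fun i hi => ?_⟩
  have hi0 : a' i = 0 := by
    by_contra h0
    exact hi (Finset.mem_singleton.1 (hsub (hmem.2 h0)))
  rw [hi0, zero_mul]

end Descent

section FrobeniusCongruence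

variable {R : Type*} [CommRing R]

theorem natCast_dvd_map_sub_pow {q : ℕ} [Fact q.Prime] {z : R} (hz : Algebra.adjoin ℤ {z} = ⊤)
    {ψ : R →+* R} {j : ℕ} (hψz : ψ z = z ^ q ^ j) (x : R) : (q : R) ∣ ψ x - x ^ q ^ j := by
  by_cases hq : IsUnit (q : R)
  · exact hq.dvd
  have : CharP (R ⧸ Ideal.span {(q : R)}) q := CharP.quotient R q hq
  let π := Ideal.Quotient.mk (Ideal.span {(q : R)})
  have hfrob : (π.comp ψ).toIntAlgHom = ((iterateFrobenius _ q j).comp π).toIntAlgHom := by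
    refine AlgHom.ext_of_adjoin_eq_top hz fun y hy => ?_
    rw [Set.mem_singleton_iff.1 hy]
    simp [hψz, iterateFrobenius_def]
  rw [← Ideal.mem_span_singleton, ← Ideal.Quotient.eq, map_pow, ← iterateFrobenius_def]
  exact DFunLike.congr_fun hfrob x

variable {ψ : R ≃+* R} {t : R} {Q : ℕ}

theorem map_eq_self_of_isPrime_of_dvd_map_sub_pow (hψ : ∀ x, t ∣ ψ x - x ^ Q) (hQ : Q ≠ 0)
    {P : Ideal R} (hP : P.IsPrime) (ht : t ∈ P) : P.map (ψ : R →+* R) = P := by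
  have hmem (x : R) : ψ x ∈ P ↔ x ∈ P := by
    have hadd := P.add_mem_iff_right (b := x ^ Q) (P.mem_of_dvd (hψ x) ht)
    rwa [sub_add_cancel, hP.pow_mem_iff_mem Q (Nat.pos_of_ne_zero hQ)] at hadd
  have hcomap : P.comap (ψ : R →+* R) = P := Ideal.ext hmem
  conv_lhs => rw [← hcomap]
  exact Ideal.map_comap_of_surjective _ ψ.surjective P

theorem map_eq_self_of_dvd_span_pow [IsDedekindDomain R] (hψ : ∀ x, t ∣ ψ x - x ^ Q) (hQ : Q ≠ 0)
    {b : ℕ} {I : Ideal R} (hI : I ∣ Ideal.span {t} ^ b) : I.map (ψ : R →+* R) = I := by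
  induction I using UniqueFactorizationMonoid.induction_on_prime with
  | h₁ => exact Ideal.map_bot
  | h₂ I hunit => rw [Ideal.isUnit_iff.1 hunit, Ideal.map_top]
  | h₃ I P _ hP ih =>
    have hPt : P ∣ Ideal.span {t} := hP.dvd_of_dvd_pow (dvd_of_mul_right_dvd hI)
    rw [Ideal.map_mul, ih (dvd_of_mul_left_dvd hI), map_eq_self_of_isPrime_of_dvd_map_sub_pow hψ hQ
      (Ideal.isPrime_of_prime hP) (Ideal.dvd_span_singleton.1 hPt)]

theorem associated_map_of_dvd_pow [IsDedekindDomain R] (hψ : ∀ x, t ∣ ψ x - x ^ Q) (hQ : Q ≠ 0)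
    {b : ℕ} {y : R} (hy : y ∣ t ^ b) : Associated (ψ y) y := by
  have hspan : Ideal.span {y} ∣ Ideal.span {t} ^ b := by
    rwa [Ideal.span_singleton_pow, Ideal.dvd_span_singleton, Ideal.mem_span_singleton]
  have hmap := map_eq_self_of_dvd_span_pow hψ hQ hspan
  rwa [Ideal.map_span, Set.image_singleton, Ideal.span_singleton_eq_span_singleton] at hmap

end FrobeniusCongruence

section Cyclotomic

open NumberField

variable {N : ℕ} [NeZero N] {K : Type*} [Field K] [NumberField K] [IsCyclotomicExtension {N} ℚ K]
  {ζ : K}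

theorem exists_algEquiv_apply_eq_pow (hζ : IsPrimitiveRoot ζ N) {k : ℕ} (hk : k.Coprime N) :
    ∃ σ : K ≃ₐ[ℚ] K, σ ζ = ζ ^ k := by
  refine ⟨(IsCyclotomicExtension.Rat.galEquivZMod N K).symm (ZMod.unitOfCoprime k hk), ?_⟩
  rw [IsCyclotomicExtension.Rat.galEquivZMod_apply_of_pow_eq N K _ hζ.pow_eq_one,
    MulEquiv.apply_symm_apply, ZMod.coe_unitOfCoprime, ZMod.val_natCast, hζ.eq_orderOf,
    pow_mod_orderOf]

theorem exists_algEquiv_apply_eq_inv (hζ : IsPrimitiveRoot ζ N) :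
    ∃ c : K ≃ₐ[ℚ] K, c ζ = ζ ^ (N - 1) ∧ c ζ = ζ⁻¹ := by
  have hpos : 1 ≤ N := NeZero.one_le
  obtain ⟨c, hc⟩ := exists_algEquiv_apply_eq_pow hζ
    ((Nat.coprime_self_sub_left hpos).2 (Nat.coprime_one_left _))
  refine ⟨c, hc, hc.trans (eq_inv_of_mul_eq_one_left ?_)⟩
  rw [← pow_succ, Nat.sub_add_cancel hpos, hζ.pow_eq_one]

theorem exists_eq_pow_or_eq_neg_pow_of_isOfFinOrder (hζ : IsPrimitiveRoot ζ N) {u : K}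
    (hu : IsOfFinOrder u) : ∃ k : ℕ, u = ζ ^ k ∨ u = -ζ ^ k := by
  rcases Nat.even_or_odd N with hN | hN
  · have : NeZero (orderOf u) := ⟨hu.orderOf_pos.ne'⟩
    have hdvd := NumberField.Units.dvd_torsionOrder_of_isPrimitiveRoot (IsPrimitiveRoot.orderOf u)
    rw [IsCyclotomicExtension.Rat.torsionOrder_eq (n := N), if_pos hN] at hdvd
    obtain ⟨k, -, hk⟩ := hζ.eq_pow_of_pow_eq_one (orderOf_dvd_iff_pow_eq_one.1 hdvd)
    exact ⟨k, Or.inl hk.symm⟩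
  · obtain ⟨k, -, hk⟩ := hζ.exists_pow_or_neg_mul_pow_of_isOfFinOrder hN hu
    exact ⟨k, hk⟩

theorem embedding_apply_eq_conj (hζ : IsPrimitiveRoot ζ N) {c : K ≃ₐ[ℚ] K} (hc : c ζ = ζ⁻¹)
    (τ : K →ₐ[ℚ] ℂ) (x : K) : τ (c x) = starRingEnd ℂ (τ x) := by
  have hnorm : ‖τ ζ‖ = 1 := Complex.norm_eq_one_of_pow_eq_one
    (by rw [← map_pow, hζ.pow_eq_one, map_one]) (NeZero.ne N)
  have hcomp : τ.comp (c : K →ₐ[ℚ] K) =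
      ((Complex.conjAe.restrictScalars ℚ : ℂ ≃ₐ[ℚ] ℂ) : ℂ →ₐ[ℚ] ℂ).comp τ :=
    (hζ.powerBasis ℚ).algHom_ext (by simp [hc, Complex.inv_eq_conj hnorm])
  exact DFunLike.congr_fun hcomp x

theorem isOfFinOrder_of_apply_eq_mul {Y u : K} {ψ : K ≃ₐ[ℚ] K} (hu : IsIntegral ℤ u)
    (hψY : ψ Y = u * Y) {C : ℝ} (hC : C ≠ 0) (hY : ∀ τ : K →ₐ[ℚ] ℂ, ‖τ Y‖ = C) :
    IsOfFinOrder u := by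
  obtain ⟨m, hm, hum⟩ := Embeddings.pow_eq_one_of_norm_eq_one K ℂ hu fun φ => by
    have hψ : ‖φ (u * Y)‖ = C := hψY ▸ hY (φ.toRatAlgHom.comp (ψ : K →ₐ[ℚ] K))
    have hφ : ‖φ Y‖ = C := hY φ.toRatAlgHom
    rwa [map_mul, norm_mul, hφ, mul_eq_right₀ hC] at hψ
  exact isOfFinOrder_iff_pow_eq_one.2 ⟨m, hm, hum⟩

-- `ψ` acts on the integers as an iterated Frobenius modulo `q`, so it fixes every ideal dividing a
-- power of `q`.
theorem exists_isIntegral_apply_eq_mul (hζ : IsPrimitiveRoot ζ N) {q : ℕ} [Fact q.Prime] {j b : ℕ}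
    {ψ : K ≃ₐ[ℚ] K} (hψ : ψ ζ = ζ ^ q ^ j) {Y Y' : K} (hYint : IsIntegral ℤ Y)
    (hYint' : IsIntegral ℤ Y') (hY : Y * Y' = (q : K) ^ b) :
    ∃ u : K, IsIntegral ℤ u ∧ ψ Y = u * Y := by
  let ψR : 𝓞 K ≃+* 𝓞 K := RingOfIntegers.mapRingEquiv ψ.toRingEquiv
  have hfrob : ∀ x, (q : 𝓞 K) ∣ ψR x - x ^ q ^ j :=
    natCast_dvd_map_sub_pow (ψ := (ψR : 𝓞 K →+* 𝓞 K))
      (IsCyclotomicExtension.Rat.adjoin_singleton_eq_top hζ)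
      (RingOfIntegers.ext (hψ.trans (map_pow (algebraMap (𝓞 K) K) hζ.toInteger _).symm))
  have hdvd : (⟨Y, hYint⟩ : 𝓞 K) ∣ (q : 𝓞 K) ^ b := by
    have hcast : algebraMap (𝓞 K) K ((q : 𝓞 K) ^ b) = (q : K) ^ b := by simp
    exact ⟨⟨Y', hYint'⟩, RingOfIntegers.ext (hcast.trans hY.symm)⟩
  have hQ : q ^ j ≠ 0 := pow_ne_zero _ (Fact.out : q.Prime).ne_zero
  obtain ⟨v, hv⟩ := (associated_map_of_dvd_pow hfrob hQ hdvd).symm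
  refine ⟨((v : 𝓞 K) : K), RingOfIntegers.isIntegral_coe _, ?_⟩
  rw [mul_comm]
  exact (congrArg (algebraMap (𝓞 K) K) hv).symm

theorem exists_apply_eq_pow_mul_or_neg (hζ : IsPrimitiveRoot ζ N) {q : ℕ} [Fact q.Prime] {j b : ℕ}
    {ψ c : K ≃ₐ[ℚ] K} (hψ : ψ ζ = ζ ^ q ^ j) (hc : c ζ = ζ⁻¹) {Y : K} (hYint : IsIntegral ℤ Y)
    (hY : Y * c Y = (q : K) ^ b) : ∃ k : ℕ, ψ Y = ζ ^ k * Y ∨ ψ Y = -ζ ^ k * Y := by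
  have hqb : 0 < (q : ℝ) ^ b := pow_pos (Nat.cast_pos.2 (Fact.out : q.Prime).pos) b
  obtain ⟨u, hu, hψY⟩ := exists_isIntegral_apply_eq_mul hζ hψ hYint
    (hYint.map (c.toAlgHom.restrictScalars ℤ)) hY
  have hnorm (τ : K →ₐ[ℚ] ℂ) : ‖τ Y‖ = √((q : ℝ) ^ b) := by
    have hτ := congrArg τ hY
    rw [map_mul, embedding_apply_eq_conj hζ hc, Complex.mul_conj, Complex.normSq_eq_norm_sq,
      map_pow, map_natCast] at hτ
    rw [eq_comm, Real.sqrt_eq_iff_eq_sq hqb.le (norm_nonneg _)]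
    exact_mod_cast hτ.symm
  obtain ⟨k, rfl | rfl⟩ := exists_eq_pow_or_eq_neg_pow_of_isOfFinOrder hζ
    (isOfFinOrder_of_apply_eq_mul hu hψY (Real.sqrt_pos.2 hqb).ne' hnorm)
  · exact ⟨k, Or.inl hψY⟩
  · exact ⟨k, Or.inr hψY⟩

end Cyclotomic

section RootCharacter

variable {p r : ℕ} [NeZero p] {K : Type*} [Field K] {ζ : K}

/-- The additive character `x ↦ ζ ^ (r * x)` of `ZMod p` attached to a root of unity `ζ` of order
`p * r`; its values are the `p`-th roots of unity. -/
def rootCharacter (hζ : IsPrimitiveRoot ζ (p * r)) : AddChar (ZMod p) K :=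
  AddChar.zmodChar p (ζ := ζ ^ r) (by rw [← pow_mul, mul_comm, hζ.pow_eq_one])

theorem rootCharacter_natCast (hζ : IsPrimitiveRoot ζ (p * r)) (k : ℕ) :
    rootCharacter hζ k = ζ ^ (r * k) := by
  rw [rootCharacter, AddChar.zmodChar_apply', pow_mul]

theorem rootCharacter_apply (hζ : IsPrimitiveRoot ζ (p * r)) (x : ZMod p) :
    rootCharacter hζ x = ζ ^ (r * x.val) := by
  rw [rootCharacter, AddChar.zmodChar_apply, pow_mul]

theorem rootCharacter_isPrimitive [NeZero (p * r)] (hζ : IsPrimitiveRoot ζ (p * r)) :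
    (rootCharacter hζ).IsPrimitive :=
  AddChar.zmodChar_primitive_of_primitive_root p
    (hζ.pow (Nat.pos_of_ne_zero (NeZero.ne _)) (mul_comm p r))

theorem map_rootCharacter (hζ : IsPrimitiveRoot ζ (p * r)) {σ : K →+* K} {k : ℕ}
    (hσ : σ ζ = ζ ^ k) (x : ZMod p) : σ (rootCharacter hζ x) = rootCharacter hζ (k * x) := by
  rw [← nsmul_eq_mul, AddChar.map_nsmul_eq_pow, rootCharacter_apply, map_pow, hσ, ← pow_mul,
    ← pow_mul, mul_comm]

-- `ζ` is the product of a power of `ζ ^ r` and one of `ζ ^ p`.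
theorem exists_pow_eq_mul_rootCharacter (hζ : IsPrimitiveRoot ζ (p * r)) (hpr : p.Coprime r)
    (k : ℕ) : ∃ w ∈ Algebra.adjoin ℤ {ζ ^ p}, ∃ s, ζ ^ k = w * rootCharacter hζ s := by
  obtain ⟨u, hup, hur⟩ := Nat.chineseRemainder hpr k 0
  obtain ⟨v, hvp, hvr⟩ := Nat.chineseRemainder hpr 0 k
  obtain ⟨x, rfl⟩ := Nat.modEq_zero_iff_dvd.1 hur
  obtain ⟨y, rfl⟩ := Nat.modEq_zero_iff_dvd.1 hvp
  refine ⟨(ζ ^ p) ^ y, pow_mem (Algebra.self_mem_adjoin_singleton ℤ _) y, x, ?_⟩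
  have hmod : k ≡ p * y + r * x [MOD p * r] := by
    rw [← Nat.modEq_and_modEq_iff_modEq_mul hpr]
    exact ⟨by simpa using (hvp.add hup).symm, by simpa using (hvr.add hur).symm⟩
  rw [rootCharacter_natCast, ← pow_mul, ← pow_add]
  exact pow_eq_pow_of_modEq hmod hζ.pow_eq_one

theorem exists_eq_sum_mul_rootCharacter (hζ : IsPrimitiveRoot ζ (p * r)) (hpr : p.Coprime r) {Y : K}
    (hY : Y ∈ Algebra.adjoin ℤ {ζ}) :
    ∃ a : ZMod p → K, (∀ i, a i ∈ Algebra.adjoin ℤ {ζ ^ p}) ∧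
      Y = ∑ i, a i * rootCharacter hζ i := by
  rw [Algebra.adjoin_singleton_eq_range_aeval] at hY
  obtain ⟨f, rfl⟩ := hY
  induction f using Polynomial.induction_on' with
  | add f g ihf ihg =>
    obtain ⟨a, ha, haf⟩ := ihf
    obtain ⟨b, hb, hbg⟩ := ihg
    refine ⟨a + b, fun i => add_mem (ha i) (hb i), ?_⟩
    simp only [map_add, Pi.add_apply, add_mul, Finset.sum_add_distrib] at *
    rw [haf, hbg]
  | monomial k m =>
    obtain ⟨w, hw, s, hk⟩ := exists_pow_eq_mul_rootCharacter hζ hpr k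
    refine ⟨Pi.single s (m * w), fun i => ?_, ?_⟩
    · by_cases his : i = s
      · rw [his, Pi.single_eq_same]
        exact mul_mem (intCast_mem _ m) hw
      · rw [Pi.single_eq_of_ne his]
        exact zero_mem _
    · rw [Fintype.sum_eq_single s fun i his => by rw [Pi.single_eq_of_ne his, zero_mul]]
      simp [Polynomial.aeval_monomial, hk, mul_assoc]

end RootCharacter

section PowerAutomorphism

theorem isIntegral_of_mem_adjoin_of_pow_eq_one {R A : Type*} [CommRing R] [CommRing A] [Algebra R A]
    {ζ x : A} {N : ℕ} (hN : N ≠ 0) (hζ : ζ ^ N = 1) (hx : x ∈ Algebra.adjoin R {ζ}) :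
    IsIntegral R x := by
  have hle : Algebra.adjoin R {ζ} ≤ integralClosure R A :=
    Algebra.adjoin_singleton_le (.of_pow (Nat.pos_of_ne_zero hN) (hζ ▸ isIntegral_one))
  exact hle hx

variable {K : Type*} [Field K] {ζ : K} {σ : K →+* K} {k p r : ℕ}

theorem map_mem_adjoin_pow (hσ : σ ζ = ζ ^ k) {x : K} (hx : x ∈ Algebra.adjoin ℤ {ζ ^ p}) :
    σ x ∈ Algebra.adjoin ℤ {ζ ^ p} := by
  have hle : Algebra.adjoin ℤ {ζ ^ p} ≤ (Algebra.adjoin ℤ {ζ ^ p}).comap σ.toIntAlgHom := by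
    refine Algebra.adjoin_singleton_le ?_
    rw [Subalgebra.mem_comap, RingHom.toIntAlgHom_apply, map_pow, hσ, pow_right_comm]
    exact pow_mem (Algebra.self_mem_adjoin_singleton ℤ _) k
  exact hle hx

theorem map_eq_self_of_mem_adjoin_pow (hζ : ζ ^ (p * r) = 1) (hσ : σ ζ = ζ ^ k)
    (hk : k ≡ 1 [MOD r]) {x : K} (hx : x ∈ Algebra.adjoin ℤ {ζ ^ p}) : σ x = x := by
  have hfix : σ (ζ ^ p) = ζ ^ p := by
    rw [map_pow, hσ, pow_right_comm, pow_eq_pow_of_modEq hk (by rw [← pow_mul, hζ]), pow_one]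
  have hle : Algebra.adjoin ℤ {ζ ^ p} ≤ AlgHom.equalizer σ.toIntAlgHom (AlgHom.id ℤ K) :=
    Algebra.adjoin_singleton_le hfix
  exact hle hx

end PowerAutomorphism

section WeilNumber

variable {p r : ℕ} [Fact p.Prime] [NeZero (p * r)] {K : Type*} [Field K] [NumberField K]
  [IsCyclotomicExtension {p * r} ℚ K] {ζ : K}

theorem onlyTrivialRelations_rootCharacter (hζ : IsPrimitiveRoot ζ (p * r)) (hpr : p.Coprime r) :
    OnlyTrivialRelations (rootCharacter hζ) (Algebra.adjoin ℤ {ζ ^ p}) := by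
  refine onlyTrivialRelations_of_exists_ringHom (rootCharacter_isPrimitive hζ) fun d hd => ?_
  obtain ⟨k, hkp, hkr⟩ := Nat.chineseRemainder hpr d.val 1
  have hkd : (k : ZMod p) = d := by
    rw [(ZMod.natCast_eq_natCast_iff _ _ _).2 hkp, ZMod.natCast_zmod_val]
  have hcoprime : k.Coprime (p * r) := by
    refine Nat.Coprime.mul_right ?_ (hkr.gcd_eq.trans (Nat.gcd_one_left r))
    rw [Nat.coprime_comm, (Fact.out : p.Prime).coprime_iff_not_dvd, ← ZMod.natCast_eq_zero_iff, hkd]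
    exact hd
  obtain ⟨σ, hσ⟩ := exists_algEquiv_apply_eq_pow hζ hcoprime
  exact ⟨(σ : K ≃+* K), fun x => hkd ▸ map_rootCharacter hζ hσ x,
    fun x hx => map_eq_self_of_mem_adjoin_pow hζ.pow_eq_one hσ hkr hx⟩

theorem exists_apply_eq_mul_rootCharacter (hζ : IsPrimitiveRoot ζ (p * r)) (hpr : p.Coprime r)
    {q : ℕ} [Fact q.Prime] {j b : ℕ} {ψ c : K ≃ₐ[ℚ] K} (hψ : ψ ζ = ζ ^ q ^ j) (hc : c ζ = ζ⁻¹)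
    {Y : K} (hYint : IsIntegral ℤ Y) (hY : Y * c Y = (q : K) ^ b) :
    ∃ w ∈ Algebra.adjoin ℤ {ζ ^ p}, ∃ s, ψ Y = w * rootCharacter hζ s * Y := by
  obtain ⟨k, hk⟩ := exists_apply_eq_pow_mul_or_neg hζ hψ hc hYint hY
  obtain ⟨w, hw, s, hws⟩ := exists_pow_eq_mul_rootCharacter hζ hpr k
  rcases hk with hk | hk
  · exact ⟨w, hw, s, by rw [hk, hws]⟩
  · exact ⟨-w, neg_mem hw, s, by rw [hk, hws, neg_mul w]⟩

theorem exists_eq_mul_pow_of_mul_conj_eq (hζ : IsPrimitiveRoot ζ (p * r)) (hpr : p.Coprime r)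
    {q : ℕ} [Fact q.Prime] (hqr : q.Coprime r) {j : ℕ} (hj : (q : ZMod p) ^ j = -1) {b : ℕ}
    (hbig : (q ^ b) ^ 2 + q ^ b + 2 ≤ p) (hbig3 : 3 ^ q ^ b < p ^ 2)
    {Y : K} (hY : Y ∈ Algebra.adjoin ℤ {ζ}) (τ : K →ₐ[ℚ] ℂ)
    (hYn : τ Y * starRingEnd ℂ (τ Y) = (q : ℂ) ^ b) :
    ∃ β ∈ Algebra.adjoin ℤ {ζ ^ p}, ∃ i : ℕ, Y = β * ζ ^ (r * i) := by
  have hN : p * r ≠ 0 := NeZero.ne _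
  have hp3 : 3 < p := by
    have : 0 < q ^ b := pow_pos (Fact.out : q.Prime).pos b
    nlinarith
  obtain ⟨c, hcpow, hcinv⟩ := exists_algEquiv_apply_eq_inv hζ
  have hqj : ((q ^ j : ℕ) : ZMod p) = -1 := by rw [Nat.cast_pow, hj]
  have hqpr : (q ^ j).Coprime (p * r) := by
    refine Nat.Coprime.mul_right ((ZMod.isUnit_iff_coprime _ _).1 ?_) (hqr.pow_left j)
    exact hqj ▸ isUnit_one.neg
  obtain ⟨ψ, hψ⟩ := exists_algEquiv_apply_eq_pow hζ hqpr
  have hpred : ((p * r - 1 : ℕ) : ZMod p) = -1 := by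
    rw [Nat.cast_sub NeZero.one_le, Nat.cast_mul, CharP.cast_eq_zero, zero_mul, Nat.cast_one,
      zero_sub]
  have hτ : Function.Injective τ := τ.injective
  have hYc : Y * c Y = (q : K) ^ b :=
    hτ (by rw [map_mul, embedding_apply_eq_conj hζ hcinv, hYn, map_pow, map_natCast])
  have hYint : IsIntegral ℤ Y := isIntegral_of_mem_adjoin_of_pow_eq_one hN hζ.pow_eq_one hY
  obtain ⟨w, hw, s, hψY⟩ := exists_apply_eq_mul_rootCharacter hζ hpr hψ hcinv hYint hYc
  obtain ⟨a, ha, rfl⟩ := exists_eq_sum_mul_rootCharacter hζ hpr hY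
  have hζr : (ζ ^ p) ^ r = 1 := by rw [← pow_mul, hζ.pow_eq_one]
  obtain ⟨β, hβ, h, hYβ⟩ := exists_eq_mul_of_map_eq
    (c := (c : K ≃+* K)) (ψ := (ψ : K ≃+* K)) (n := q ^ b)
    (onlyTrivialRelations_rootCharacter hζ hpr)
    (fun x hx => isIntegral_of_mem_adjoin_of_pow_eq_one (right_ne_zero_of_mul hN) hζr hx)
    (fun x => by rw [map_rootCharacter hζ hcpow, hpred, neg_one_mul])
    (fun x hx => map_mem_adjoin_pow hcpow hx)
    (fun τ x => embedding_apply_eq_conj hζ hcinv τ x)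
    (fun x => by rw [map_rootCharacter hζ hψ, hqj, neg_one_mul])
    (fun x hx => map_mem_adjoin_pow hψ hx)
    ha (hYc.trans (Nat.cast_pow q b).symm) hw hψY hp3 hbig hbig3
  exact ⟨β, hβ, h.val, by rw [hYβ, rootCharacter_apply]⟩

end WeilNumber

theorem isCyclotomicExtension_intermediateField_adjoin (F : Type*) {L : Type*} [Field F] [Field L]
    [Algebra F L] {N : ℕ} [NeZero N] {ζ : L} (hζ : IsPrimitiveRoot ζ N) :
    IsCyclotomicExtension {N} F (IntermediateField.adjoin F {ζ}) := by
  have halg : IsAlgebraic F ζ := (hζ.isIntegral (NeZero.pos N)).tower_top.isAlgebraic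
  change IsCyclotomicExtension {N} F (IntermediateField.adjoin F {ζ}).toSubalgebra
  rw [IntermediateField.adjoin_simple_toSubalgebra_of_isAlgebraic halg]
  exact hζ.adjoin_isCyclotomicExtension F

theorem exists_eq_mul_pow_of_mul_conj_eq_complex {p q r b j : ℕ} [Fact p.Prime] [Fact q.Prime]
    [NeZero (p * r)] {Z Y : ℂ} (hZ : IsPrimitiveRoot Z (p * r)) (hpr : p.Coprime r)
    (hqr : q.Coprime r) (hj : (q : ZMod p) ^ j = -1) (hbig : (q ^ b) ^ 2 + q ^ b + 2 ≤ p)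
    (hbig3 : 3 ^ q ^ b < p ^ 2) (hY : Y ∈ Algebra.adjoin ℤ {Z})
    (hYn : Y * starRingEnd ℂ Y = (q : ℂ) ^ b) :
    ∃ β ∈ Algebra.adjoin ℤ {Z ^ p}, ∃ i : ℕ, Y = β * Z ^ (r * i) := by
  let K := IntermediateField.adjoin ℚ {Z}
  let ζ : K := IntermediateField.AdjoinSimple.gen ℚ Z
  have : IsCyclotomicExtension {p * r} ℚ K :=
    isCyclotomicExtension_intermediateField_adjoin ℚ hZ
  have : NumberField K := IsCyclotomicExtension.numberField {p * r} ℚ K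
  have hζ : IsPrimitiveRoot ζ (p * r) :=
    .of_map_of_injective (f := K.val) hZ K.val.injective
  have map_adjoin (x : K) :
      (Algebra.adjoin ℤ {x}).map (K.val.restrictScalars ℤ) = Algebra.adjoin ℤ {(x : ℂ)} := by
    rw [AlgHom.map_adjoin, Set.image_singleton]
    rfl
  rw [← show (ζ : ℂ) = Z from rfl, ← map_adjoin] at hY
  obtain ⟨Y, hY, rfl⟩ := hY
  obtain ⟨β, hβ, i, rfl⟩ := exists_eq_mul_pow_of_mul_conj_eq hζ hpr hqr hj hbig hbig3 hY K.val hYn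
  exact ⟨β, map_adjoin (ζ ^ p) ▸ Subalgebra.mem_map.2 ⟨β, hβ, rfl⟩, i, rfl⟩

theorem exp_two_pi_mul_I_div_mul_pow {p : ℕ} (hp : p ≠ 0) (z : ℂ) :
    exp (2 * Real.pi * I / (p * z)) ^ p = exp (2 * Real.pi * I / z) := by
  rw [← exp_nat_mul, ← mul_div_assoc, mul_div_mul_left _ _ (Nat.cast_ne_zero.2 hp)]

theorem exists_pow_eq_neg_one_of_even_orderOf {R : Type*} [Ring R] [NoZeroDivisors R] {x : R}
    (hx : IsOfFinOrder x) (heven : Even (orderOf x)) : ∃ j, x ^ j = -1 := by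
  obtain ⟨j, hj⟩ := heven
  have hpos : 0 < orderOf x := hx.orderOf_pos
  have hsq : (x ^ j) ^ 2 = 1 := by rw [← pow_mul, mul_two, ← hj, pow_orderOf_eq_one]
  exact ⟨j, (sq_eq_one_iff.1 hsq).resolve_left (pow_ne_one_of_lt_orderOf (by lia) (by lia))⟩

theorem three_pow_lt_sq_of_rpow_half_lt {n p : ℕ} (h : (3 : ℝ) ^ ((n : ℝ) / 2) < p) :
    3 ^ n < p ^ 2 := by
  have hsq : ((3 : ℝ) ^ ((n : ℝ) / 2)) ^ 2 = 3 ^ n := by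
    rw [← Real.rpow_mul_natCast (by norm_num), Nat.cast_ofNat, div_mul_cancel₀ _ two_ne_zero,
      Real.rpow_natCast]
  have hlt : (3 : ℝ) ^ n < (p : ℝ) ^ 2 := hsq ▸ pow_lt_pow_left₀ h (by positivity) two_ne_zero
  exact_mod_cast hlt

/-- Let `p, q` be distinct primes, `n = q^b`, and `r` coprime to `pq`. If
`Y ∈ ℤ[ζ_{pr}]` satisfies `Y·conj(Y) = n`, the multiplicative order of `q` mod `p`
is even, and `p > max(3^{n/2}, n² + n + 1)`, then `Y·η ∈ ℤ[ζ_r]` for some root of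
unity `η`. -/
theorem weil_number_descent (p q : ℕ) (hp : p.Prime) (hq : q.Prime) (hpq : p ≠ q)
    (b : ℕ) (hb : 1 ≤ b) (n : ℕ) (hn : n = q ^ b)
    (r : ℕ) (hr : 1 ≤ r) (hgcd : Nat.gcd r (p * q) = 1)
    (Y : ℂ)
    (hY : Y ∈ Algebra.adjoin ℤ
      ({Complex.exp (2 * Real.pi * Complex.I / ((p : ℂ) * (r : ℂ)))} : Set ℂ))
    (hYn : Y * (starRingEnd ℂ) Y = (n : ℂ))
    (hord : Even (orderOf (q : ZMod p)))
    (hbig : (p : ℝ) > max ((3 : ℝ) ^ ((n : ℝ) / 2)) ((n : ℝ) ^ 2 + (n : ℝ) + 1)) :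
    ∃ η : ℂ, (∃ k : ℕ, 0 < k ∧ η ^ k = 1) ∧
      Y * η ∈ Algebra.adjoin ℤ
        ({Complex.exp (2 * Real.pi * Complex.I / (r : ℂ))} : Set ℂ) := by
  subst hn
  have : Fact p.Prime := ⟨hp⟩
  have : Fact q.Prime := ⟨hq⟩
  have hpr : p.Coprime r := (Nat.Coprime.coprime_mul_right_right hgcd).symm
  have hqr : q.Coprime r := (Nat.Coprime.coprime_mul_left_right hgcd).symm
  have hN : p * r ≠ 0 := mul_ne_zero hp.ne_zero (Nat.ne_of_gt hr)
  have : NeZero (p * r) := ⟨hN⟩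
  obtain ⟨hbig3, hbig⟩ := max_lt_iff.1 hbig
  have hq0 : (q : ZMod p) ≠ 0 := by
    rwa [Ne, ZMod.natCast_eq_zero_iff, Nat.prime_dvd_prime_iff_eq hp hq]
  obtain ⟨j, hj⟩ := exists_pow_eq_neg_one_of_even_orderOf
    (isOfFinOrder_iff_isUnit.2 hq0.isUnit) hord
  have hZ : IsPrimitiveRoot (exp (2 * Real.pi * I / ((p : ℂ) * r))) (p * r) :=
    mod_cast isPrimitiveRoot_exp (p * r) hN
  obtain ⟨β, hβ, i, rfl⟩ := exists_eq_mul_pow_of_mul_conj_eq_complex hZ hpr hqr hj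
    (mod_cast hbig) (three_pow_lt_sq_of_rpow_half_lt hbig3) hY (hYn.trans (Nat.cast_pow q b))
  refine ⟨(exp (2 * Real.pi * I / ((p : ℂ) * r)) ^ (r * i))⁻¹,
    ⟨p * r, Nat.pos_of_ne_zero hN, ?_⟩, ?_⟩
  · rw [inv_pow, pow_right_comm, hZ.pow_eq_one, one_pow, inv_one]
  · rw [mul_inv_cancel_right₀ (pow_ne_zero _ (exp_ne_zero _))]
    rwa [exp_two_pi_mul_I_div_mul_pow hp.ne_zero] at hβ
end

section
/- Let m be a positive integer, let ζ_m = e^{2πi/m} ∈ ℂ, and let Y be a nonzero element of ℤ[ζ_m]. Then 𝓜(Y) := (1/φ(m)) · ∑_{σ ∈ Gal(ℚ(ζ_m)/ℚ)} σ(Y·conj(Y)) ≥ 1, where conj denotes complex conjugation and φ is Euler's totient function. (Each σ(Y·conj(Y)) is a nonnegative real algebraic number, so the sum is a real number.) -/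
open Complex

/-!
The numbers `σ(Y·conj(Y))` are the squared absolute values of the conjugates of `Y`, because complex
conjugation restricts to an element of the abelian group `Gal(ℚ(ζ_m)/ℚ)`. Their product is the
square of the norm of `Y`, a nonzero integer, so it is at least `1`; by the inequality of arithmetic
and geometric means so is their average.
-/

open Module ComplexConjugate

theorem card_le_sum_of_one_le_prod {ι : Type*} {s : Finset ι} {f : ι → ℝ}
    (hf : ∀ i ∈ s, 0 ≤ f i) (hprod : 1 ≤ ∏ i ∈ s, f i) : (s.card : ℝ) ≤ ∑ i ∈ s, f i := by
  have one_le_exp : 1 ≤ Real.exp (∑ i ∈ s, (f i - 1)) :=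
    calc
      1 ≤ ∏ i ∈ s, f i := hprod
      _ ≤ ∏ i ∈ s, Real.exp (f i - 1) :=
        Finset.prod_le_prod hf fun i _ ↦ by linarith [Real.add_one_le_exp (f i - 1)]
      _ = Real.exp (∑ i ∈ s, (f i - 1)) := (Real.exp_sum s _).symm
  simpa using Real.one_le_exp_iff.mp one_le_exp

section Embeddings

variable {K : Type*} [Field K] [NumberField K] {x : K}

theorem one_le_abs_norm_of_isIntegral (hx : IsIntegral ℤ x) (hx0 : x ≠ 0) :
    1 ≤ |Algebra.norm ℚ x| := by
  obtain ⟨n, hn⟩ := IsIntegrallyClosed.isIntegral_iff.mp (Algebra.isIntegral_norm ℚ hx)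
  rw [eq_intCast] at hn
  have hn0 : n ≠ 0 := by
    rintro rfl
    exact Algebra.norm_ne_zero_iff.mpr hx0 (hn.symm.trans Int.cast_zero)
  rw [← hn]
  exact_mod_cast Int.one_le_abs hn0

theorem prod_norm_embeddings_eq_abs_norm (x : K) :
    ∏ φ : K →ₐ[ℚ] ℂ, ‖φ x‖ = |Algebra.norm ℚ x| := by
  rw [← norm_prod, ← Algebra.norm_eq_prod_embeddings, eq_ratCast, Complex.norm_ratCast,
    Rat.cast_abs]

theorem finrank_le_sum_norm_embeddings_pow (hx : IsIntegral ℤ x) (hx0 : x ≠ 0) (k : ℕ) :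
    (finrank ℚ K : ℝ) ≤ ∑ φ : K →ₐ[ℚ] ℂ, ‖φ x‖ ^ k := by
  have one_le_prod : 1 ≤ ∏ φ : K →ₐ[ℚ] ℂ, ‖φ x‖ ^ k := by
    rw [Finset.prod_pow, prod_norm_embeddings_eq_abs_norm]
    exact one_le_pow₀ (mod_cast one_le_abs_norm_of_isIntegral hx hx0)
  rw [← AlgHom.card ℚ K ℂ]
  exact card_le_sum_of_one_le_prod (fun φ _ ↦ by positivity) one_le_prod

theorem finrank_le_sum_norm_galois_pow [Normal ℚ K] [Algebra K ℂ] [Fintype Gal(K/ℚ)]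
    (hx : IsIntegral ℤ x) (hx0 : x ≠ 0) (k : ℕ) :
    (finrank ℚ K : ℝ) ≤ ∑ σ : Gal(K/ℚ), ‖algebraMap K ℂ (σ x)‖ ^ k := by
  rw [← Fintype.sum_equiv (Normal.algHomEquivAut ℚ ℂ K) (fun φ ↦ ‖φ x‖ ^ k)]
  · exact finrank_le_sum_norm_embeddings_pow hx hx0 k
  · intro φ
    simp [AlgHom.restrictNormal']

end Embeddings

theorem algebraMap_apply_restrictNormal {F K L : Type*} [Field F] [Field K] [Field L]
    [Algebra F K] [Algebra F L] [Algebra K L] [IsScalarTower F K L] [Normal F K]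
    [IsMulCommutative Gal(K/F)] (τ : Gal(L/F)) (σ : Gal(K/F)) (x : K) :
    algebraMap K L (σ (τ.restrictNormal K x)) = τ (algebraMap K L (σ x)) := by
  rw [← AlgEquiv.restrictNormal_commutes, ← AlgEquiv.mul_apply, ← AlgEquiv.mul_apply,
    mul_comm' σ]

section Subfield

variable {K : IntermediateField ℚ ℂ}

theorem coe_apply_mul_conj_eq_norm_sq [Normal ℚ K] [IsMulCommutative Gal(K/ℚ)]
    (σ : Gal(K/ℚ)) (y : K) (hmem : (y : ℂ) * conj (y : ℂ) ∈ K) :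
    (σ ⟨y * conj (y : ℂ), hmem⟩ : ℂ) = (‖(σ y : ℂ)‖ ^ 2 : ℝ) := by
  let c : Gal(ℂ/ℚ) := conjAe.restrictScalars ℚ
  have mul_conj_eq : (⟨y * conj (y : ℂ), hmem⟩ : K) = y * c.restrictNormal K y :=
    Subtype.ext (congrArg ((y : ℂ) * ·) (c.restrictNormal_commutes K y).symm)
  have conj_comm : (σ (c.restrictNormal K y) : ℂ) = conj (σ y : ℂ) :=
    algebraMap_apply_restrictNormal c σ y
  rw [mul_conj_eq, map_mul, IntermediateField.coe_mul, conj_comm, mul_conj', ofReal_pow]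

theorem M_of_nonzero_ge_one_general [FiniteDimensional ℚ K] [IsAbelianGalois ℚ K]
    [Fintype Gal(K/ℚ)] (y : K) (hy : IsIntegral ℤ y) (hy0 : y ≠ 0)
    (hmem : (y : ℂ) * conj (y : ℂ) ∈ K) :
    ((finrank ℚ K : ℂ)⁻¹ * ∑ σ : Gal(K/ℚ), (σ ⟨y * conj (y : ℂ), hmem⟩ : ℂ)).im = 0 ∧
    1 ≤ ((finrank ℚ K : ℂ)⁻¹ * ∑ σ : Gal(K/ℚ), (σ ⟨y * conj (y : ℂ), hmem⟩ : ℂ)).re := by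
  have : NumberField K := ⟨⟩
  have average_eq : (finrank ℚ K : ℂ)⁻¹ * ∑ σ : Gal(K/ℚ), (σ ⟨y * conj (y : ℂ), hmem⟩ : ℂ) =
      ((finrank ℚ K : ℝ)⁻¹ * ∑ σ : Gal(K/ℚ), ‖(σ y : ℂ)‖ ^ 2 : ℝ) := by
    simp only [coe_apply_mul_conj_eq_norm_sq]
    push_cast
    rfl
  have finrank_pos : (0 : ℝ) < finrank ℚ K := mod_cast Module.finrank_pos
  rw [average_eq, ofReal_im, ofReal_re, inv_mul_eq_div, one_le_div finrank_pos]
  exact ⟨rfl, finrank_le_sum_norm_galois_pow hy hy0 2⟩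

end Subfield

theorem algebraAdjoin_int_subset_adjoin_rat {L : Type*} [Field L] [CharZero L] (S : Set L) :
    (Algebra.adjoin ℤ S : Set L) ⊆ IntermediateField.adjoin ℚ S :=
  Algebra.adjoin_le (S := (IntermediateField.adjoin ℚ S).toSubalgebra.restrictScalars ℤ)
    (IntermediateField.subset_adjoin ℚ S)

/-- For a nonzero `Y ∈ ℤ[ζ_m]`, the quantity
`𝓜(Y) = (1/φ(m)) ∑_{σ ∈ Gal(ℚ(ζ_m)/ℚ)} σ(Y·conj(Y))` is a real number `≥ 1`. -/
theorem M_of_nonzero_ge_one (m : ℕ) (hm : 1 ≤ m)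
    (ζ : ℂ) (hζ : ζ = Complex.exp (2 * Real.pi * Complex.I / (m : ℂ)))
    (Y : ℂ) (hY : Y ∈ Algebra.adjoin ℤ ({ζ} : Set ℂ)) (hY0 : Y ≠ 0)
    (K : IntermediateField ℚ ℂ) (hK : K = IntermediateField.adjoin ℚ ({ζ} : Set ℂ))
    (hmem : Y * (starRingEnd ℂ) Y ∈ K)
    [Fintype (K ≃ₐ[ℚ] K)] :
    ((((Nat.totient m : ℂ))⁻¹ *
        ∑ σ : K ≃ₐ[ℚ] K, ((σ ⟨Y * (starRingEnd ℂ) Y, hmem⟩ : K) : ℂ)).im = 0) ∧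
    (1 : ℝ) ≤ (((Nat.totient m : ℂ))⁻¹ *
        ∑ σ : K ≃ₐ[ℚ] K, ((σ ⟨Y * (starRingEnd ℂ) Y, hmem⟩ : K) : ℂ)).re := by
  have : NeZero m := ⟨by omega⟩
  have hprim : IsPrimitiveRoot ζ m := hζ ▸ isPrimitiveRoot_exp m (NeZero.ne m)
  have : IsCyclotomicExtension {m} ℚ K :=
    (IntermediateField.isCyclotomicExtension_singleton_iff_eq_adjoin m ℚ ℂ K hprim).mpr hK
  have : FiniteDimensional ℚ K := IsCyclotomicExtension.finiteDimensional {m} ℚ K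
  have : IsAbelianGalois ℚ K := IsCyclotomicExtension.isAbelianGalois {m} ℚ K
  have hYint : IsIntegral ℤ Y := adjoin_le_integralClosure (hprim.isIntegral hm) hY
  have hYK : Y ∈ K := hK ▸ algebraAdjoin_int_subset_adjoin_rat {ζ} hY
  rw [← IsCyclotomicExtension.finrank K (Polynomial.cyclotomic.irreducible_rat hm)]
  exact M_of_nonzero_ge_one_general ⟨Y, hYK⟩
    ((isIntegral_algebraMap_iff (algebraMap K ℂ).injective).mp hYint)
    (Subtype.coe_ne_coe.mp hY0) hmem
end

section
/- Let p ≥ 5 be a prime and let A be a symmetric subset of 𝔽_p with 1 ≤ |A| ≤ 3. Then A has a unique difference. -/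
open Finset Pointwise

/-- A nonempty subset `A` of `𝔽_p` has a unique difference if there is `x ∈ 𝔽_p`
represented exactly once as an ordered difference `a - b` with `a, b ∈ A`. -/
def HasUniqueDifference {p : ℕ} (A : Finset (ZMod p)) : Prop :=
  ∃ x : ZMod p, ((A ×ˢ A).filter fun ab => ab.1 - ab.2 = x).card = 1

/-!
Three elements `a, b, c` with `a ≠ b` either form an arithmetic progression centred at `a` or `b`,
whose two endpoints then have a unique difference, or else `a - b` itself is a unique difference.
In the first case, if `d ≠ 0` is the common difference, the differences are `0`, `±d`, `±2d`, and
`2d` could only coincide with another of them if `d` had order `2`, `3` or `4`.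
-/

section AddGroup

variable {G : Type*} [AddGroup G]

/-- The difference `a - b` is represented by the ordered pair `(a, b)` of elements of `A` and by
no other. The representing pair, rather than the value of the difference, is the parameter. -/
def IsUniqueDifference (A : Finset G) (a b : G) : Prop :=
  a ∈ A ∧ b ∈ A ∧ ∀ x ∈ A, ∀ y ∈ A, x - y = a - b → x = a ∧ y = b

theorem IsUniqueDifference.card_filter_eq_one [DecidableEq G] {A : Finset G} {a b : G}
    (h : IsUniqueDifference A a b) :
    ((A ×ˢ A).filter fun xy => xy.1 - xy.2 = a - b).card = 1 := by
  obtain ⟨ha, hb, huniq⟩ := h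
  refine card_eq_one.2 ⟨(a, b), eq_singleton_iff_unique_mem.2 ⟨by simp [ha, hb], ?_⟩⟩
  rintro ⟨x, y⟩ hxy
  obtain ⟨⟨hx, hy⟩, hsub⟩ : (x ∈ A ∧ y ∈ A) ∧ x - y = a - b := by simpa using hxy
  exact Prod.ext_iff.2 (huniq x hx y hy hsub)

theorem isUniqueDifference_singleton (a : G) : IsUniqueDifference {a} a a := by
  simp +contextual [IsUniqueDifference]

theorem sub_ne_sub_swap (no_two_torsion : ∀ g : G, 2 • g = 0 → g = 0) {a b : G} (hab : a ≠ b) :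
    b - a ≠ a - b := by
  intro h
  have : 2 • (a - b) = 0 := by rw [two_nsmul, ← eq_neg_iff_add_eq_zero, neg_sub, h]
  exact hab (sub_eq_zero.1 (no_two_torsion _ this))

variable [DecidableEq G]

theorem isUniqueDifference_of_sub_ne_sub (no_two_torsion : ∀ g : G, 2 • g = 0 → g = 0)
    {a b c : G} (hab : a ≠ b) (ha : c - a ≠ a - b) (hb : b - c ≠ a - b) :
    IsUniqueDifference {a, b, c} a b := by
  have hswap : b - a ≠ a - b := sub_ne_sub_swap no_two_torsion hab
  have hzero : (0 : G) ≠ a - b := (sub_ne_zero.2 hab).symm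
  refine ⟨by simp, by simp, fun x hx y hy h => ?_⟩
  simp only [mem_insert, mem_singleton] at hx hy
  grind [sub_self, sub_left_inj, sub_right_inj]

theorem isUniqueDifference_of_sub_eq_sub (no_two_torsion : ∀ g : G, 2 • g = 0 → g = 0)
    (no_three_torsion : ∀ g : G, 3 • g = 0 → g = 0)
    {a b c : G} (hab : a ≠ b) (hmid : a - b = b - c) :
    IsUniqueDifference {a, b, c} a c := by
  have hd : a - b ≠ 0 := sub_ne_zero.2 hab
  have hac : a - c = 2 • (a - b) := by rw [two_nsmul, ← sub_add_sub_cancel a b c, hmid]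
  have hzero : a - c ≠ 0 := fun h => hd (no_two_torsion _ (hac.symm.trans h))
  have hstep : a - b ≠ a - c := fun h => hd (by rwa [hac, two_nsmul, left_eq_add] at h)
  have hneg_step : b - a ≠ a - c := fun h => hd (no_three_torsion _ (by
    rw [succ_nsmul, ← hac, ← h, sub_add_sub_cancel, sub_self]))
  have hswap : c - a ≠ a - c := sub_ne_sub_swap no_two_torsion (sub_ne_zero.1 hzero)
  have hmid_neg : c - b = b - a := by rw [← neg_sub b c, ← hmid, neg_sub]
  refine ⟨by simp, by simp, fun x hx y hy h => ?_⟩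
  simp only [mem_insert, mem_singleton] at hx hy
  grind [sub_self]

theorem exists_isUniqueDifference_triple (no_two_torsion : ∀ g : G, 2 • g = 0 → g = 0)
    (no_three_torsion : ∀ g : G, 3 • g = 0 → g = 0) {a b : G} (hab : a ≠ b) (c : G) :
    ∃ x y, IsUniqueDifference {a, b, c} x y := by
  by_cases hb : a - b = b - c
  · exact ⟨a, c, isUniqueDifference_of_sub_eq_sub no_two_torsion no_three_torsion hab hb⟩
  by_cases ha : b - a = a - c
  · rw [insert_comm]
    exact ⟨b, c, isUniqueDifference_of_sub_eq_sub no_two_torsion no_three_torsion hab.symm ha⟩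
  refine ⟨a, b, isUniqueDifference_of_sub_ne_sub no_two_torsion hab (fun h => ha ?_) (Ne.symm hb)⟩
  rw [← neg_sub a b, ← h, neg_sub]

theorem small_symmetric_has_unique_difference_general
    (no_two_torsion : ∀ g : G, 2 • g = 0 → g = 0) (no_three_torsion : ∀ g : G, 3 • g = 0 → g = 0)
    (A : Finset G) (hA : A.Nonempty) (hcard : A.card ≤ 3) :
    ∃ x : G, ((A ×ˢ A).filter fun ab => ab.1 - ab.2 = x).card = 1 := by
  suffices ∃ a b, IsUniqueDifference A a b by
    obtain ⟨a, b, hab⟩ := this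
    exact ⟨a - b, hab.card_filter_eq_one⟩
  have hpos : 0 < A.card := hA.card_pos
  obtain hone | htwo | hthree : A.card = 1 ∨ A.card = 2 ∨ A.card = 3 := by lia
  · obtain ⟨a, rfl⟩ := card_eq_one.1 hone
    exact ⟨a, a, isUniqueDifference_singleton a⟩
  · obtain ⟨a, b, hab, rfl⟩ := card_eq_two.1 htwo
    simpa only [pair_eq_singleton] using
      exists_isUniqueDifference_triple no_two_torsion no_three_torsion hab b
  · obtain ⟨a, b, c, hab, -, -, rfl⟩ := card_eq_three.1 hthree
    exact exists_isUniqueDifference_triple no_two_torsion no_three_torsion hab c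

end AddGroup

theorem zmod_eq_zero_of_nsmul_eq_zero {n k : ℕ} (hnk : n.Coprime k) (g : ZMod n)
    (h : k • g = 0) : g = 0 := by
  rw [← Nat.card_zmod n] at hnk
  exact hnk.nsmul_right_bijective.injective (h.trans (smul_zero k).symm)

/-- Let `p ≥ 5` be a prime and let `A` be a symmetric subset of `𝔽_p` with
`1 ≤ |A| ≤ 3`. Then `A` has a unique difference. -/
theorem small_symmetric_has_unique_difference (p : ℕ) (hp : p.Prime) (hp5 : 5 ≤ p)
    (A : Finset (ZMod p)) (hsym : A = -A)
    (h1 : 1 ≤ A.card) (h3 : A.card ≤ 3) :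
    HasUniqueDifference A :=
  small_symmetric_has_unique_difference_general
    (zmod_eq_zero_of_nsmul_eq_zero (Nat.coprime_of_lt_prime two_ne_zero (by lia) hp))
    (zmod_eq_zero_of_nsmul_eq_zero (Nat.coprime_of_lt_prime three_ne_zero (by lia) hp))
    A (card_pos.1 h1) h3
end
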